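/- arXiv:math/0603636 — 7 statements merged into one kernel-verified Lean document; each statement's English description precedes it below -/
import Mathlib

section
/- Let α ∈ (0,1/2), let f ∈ Λ^α_T with representative φ_f, and let g : [0,T] → ℝ be Hölder continuous with exponent β > α. Then the function s ↦ g(s)φ_f(s) + (α s^α / Γ(1-α)) ∫_s^T u^{-α} f(u) (g(s) - g(u)) (u-s)^{-1-α} du belongs to L²([0,T]) and is the representative φ_{gf} of g·f ∈ Λ^α_T. -/
open MeasureTheory Real Set

/-- The right-sided fractional integral of order `α` on `[0,T]`. -/
noncomputable def fracInt (T α : ℝ) (f : ℝ → ℝ) (x : ℝ) : ℝ :=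
  (1 / Real.Gamma α) * ∫ u in Set.Ioo x T, f u * (u - x) ^ (α - 1)

/-- `f ∈ Λ^α_T` with representative `φ`. -/
def memLambda (T α : ℝ) (f φ : ℝ → ℝ) : Prop :=
  MemLp φ 2 (volume.restrict (Set.Icc 0 T)) ∧
  ∀ᵐ u ∂(volume.restrict (Set.Icc 0 T)),
    f u = u ^ α * fracInt T α (fun s => s ^ (-α) * φ s) u


/-- truncated power -/
noncomputable def tpow (a t : ℝ) : ℝ := if 0 < t then t ^ (a - 1) else 0

lemma tpow_nonneg (a t : ℝ) : 0 ≤ tpow a t := by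
  unfold tpow; split_ifs with h
  · positivity
  · exact le_rfl

lemma tpow_of_pos {a t : ℝ} (h : 0 < t) : tpow a t = t ^ (a - 1) := if_pos h

lemma tpow_of_nonpos {a t : ℝ} (h : t ≤ 0) : tpow a t = 0 := if_neg (not_lt.mpr h)

@[fun_prop]
lemma measurable_tpow (a : ℝ) : Measurable (tpow a) := by
  unfold tpow
  exact Measurable.ite measurableSet_Ioi (by fun_prop) measurable_const

lemma beta01 {a b : ℝ} (ha : 0 < a) (hb : 0 < b) :
    ∫⁻ y in Ioo (0:ℝ) 1, ENNReal.ofReal (y ^ (a - 1) * (1 - y) ^ (b - 1))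
      = ENNReal.ofReal (ProbabilityTheory.beta a b) := by
  have h1 := ProbabilityTheory.lintegral_betaPDF_eq_one ha hb
  have hB := ProbabilityTheory.beta_pos ha hb
  rw [ProbabilityTheory.lintegral_betaPDF] at h1
  have h2 : ∫⁻ y in Ioo (0:ℝ) 1, ENNReal.ofReal (y ^ (a - 1) * (1 - y) ^ (b - 1))
      = ENNReal.ofReal (ProbabilityTheory.beta a b) * ∫⁻ (x : ℝ) in Ioo 0 1,
        ENNReal.ofReal (1 / ProbabilityTheory.beta a b * x ^ (a - 1) * (1 - x) ^ (b - 1)) := by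
    rw [← lintegral_const_mul' _ _ ENNReal.ofReal_ne_top]
    congr 1; ext y
    rw [← ENNReal.ofReal_mul hB.le]
    congr 1
    field_simp
  rw [h2, h1, mul_one]

lemma lintegral_tpow_mul {a b : ℝ} (ha : 0 < a) (hb : 0 < b) (x r : ℝ) :
    ∫⁻ s, ENNReal.ofReal (tpow a (s - x)) * ENNReal.ofReal (tpow b (r - s))
      = ENNReal.ofReal (ProbabilityTheory.beta a b) * ENNReal.ofReal (tpow (a + b) (r - x)) := by
  rcases le_or_gt r x with h | h
  · rw [tpow_of_nonpos (by linarith : r - x ≤ 0)]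
    simp only [ENNReal.ofReal_zero, mul_zero]
    rw [lintegral_eq_zero_iff (by fun_prop)]
    refine Filter.Eventually.of_forall fun s => ?_
    rcases le_or_gt s x with h' | h'
    · simp [tpow_of_nonpos (by linarith : s - x ≤ 0)]
    · simp [tpow_of_nonpos (by linarith : r - s ≤ 0)]
  · have hs : ∫⁻ s, ENNReal.ofReal (tpow a (s - x)) * ENNReal.ofReal (tpow b (r - s))
        = ∫⁻ s in Ioo x r, ENNReal.ofReal (tpow a (s - x)) * ENNReal.ofReal (tpow b (r - s)) := by
      rw [← lintegral_indicator measurableSet_Ioo]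
      congr 1; ext s
      by_cases hs : s ∈ Ioo x r
      · rw [indicator_of_mem hs]
      · rw [indicator_of_notMem hs]
        rcases le_or_gt s x with h' | h'
        · simp [tpow_of_nonpos (by linarith : s - x ≤ 0)]
        · have : r ≤ s := by by_contra! h''; exact hs ⟨h', h''⟩
          simp [tpow_of_nonpos (by linarith : r - s ≤ 0)]
    have hd : 0 < r - x := by linarith
    have him : (fun y => x + (r - x) * y) '' Ioo (0:ℝ) 1 = Ioo x r := by
      ext s; constructor
      · rintro ⟨y, ⟨h0, h1⟩, rfl⟩
        constructor <;> simp only <;> nlinarith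
      · rintro ⟨h0, h1⟩
        refine ⟨(s - x) / (r - x), ⟨by apply div_pos <;> linarith, by
          rw [div_lt_one hd]; linarith⟩, ?_⟩
        simp only; field_simp; ring
    rw [hs, ← him, lintegral_image_eq_lintegral_abs_deriv_mul (f' := fun _ => r - x)
      measurableSet_Ioo, ← beta01 ha hb, tpow_of_pos hd, ← lintegral_mul_const' _ _ ENNReal.ofReal_ne_top]
    · refine setLIntegral_congr_fun measurableSet_Ioo ?_
      rintro y ⟨h0, h1⟩
      have e1 : x + (r - x) * y - x = (r - x) * y := by ring
      have e2 : r - (x + (r - x) * y) = (r - x) * (1 - y) := by ring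
      simp only [e1, e2]
      rw [tpow_of_pos (mul_pos hd h0), tpow_of_pos (mul_pos hd (by linarith)),
        ← ENNReal.ofReal_mul (by positivity), ← ENNReal.ofReal_mul (by positivity),
        ← ENNReal.ofReal_mul (mul_nonneg (by positivity) (rpow_nonneg (by linarith) _))]
      congr 1
      rw [abs_of_pos hd, mul_rpow hd.le h0.le, mul_rpow hd.le (by linarith),
        show a + b - 1 = 1 + (a - 1) + (b - 1) by ring, rpow_add hd, rpow_add hd, rpow_one]
      ring
    · intro y _
      have := ((hasDerivAt_id y).const_mul (r - x)).const_add x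
      simpa using this.hasDerivWithinAt
    · intro y _ z _ hyz
      simp only at hyz
      have : (r - x) * y = (r - x) * z := by linarith
      exact mul_left_cancel₀ hd.ne' this

lemma moebius_beta {a : ℝ} (ha : 0 < a) (ha1 : a < 1) {x v r : ℝ} (hxv : x < v) (hvr : v < r) :
    ∫⁻ s in Ioo x v, ENNReal.ofReal ((s - x) ^ (a - 1) * (v - s) ^ (-a) * (r - s)⁻¹ * (r - v) ^ a)
      = ENNReal.ofReal (ProbabilityTheory.beta a (1 - a) * (r - x) ^ (a - 1)) := by
  have h1 : 0 < v - x := by linarith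
  have h2 : 0 < r - v := by linarith
  have h3 : 0 < r - x := by linarith
  have him : (fun s => (s - x) * (r - v) / ((v - x) * (r - s))) '' Ioo x v = Ioo (0:ℝ) 1 := by
    ext y; constructor
    · rintro ⟨s, ⟨h0, h1'⟩, rfl⟩
      have h4 : 0 < s - x := by linarith
      have h5 : 0 < r - s := by linarith
      refine ⟨by positivity, ?_⟩
      simp only
      rw [div_lt_one (by positivity)]
      nlinarith
    · rintro ⟨h0, h1'⟩
      have hD : 0 < (r - v) + y * (v - x) := by positivity
      refine ⟨x + y * (v - x) * (r - x) / ((r - v) + y * (v - x)), ⟨?_, ?_⟩, ?_⟩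
      · have : 0 < y * (v - x) * (r - x) / ((r - v) + y * (v - x)) := by positivity
        linarith
      · have : y * (v - x) * (r - x) / ((r - v) + y * (v - x)) < v - x := by
          rw [div_lt_iff₀ hD]
          nlinarith [mul_pos (mul_pos h1 h2) (sub_pos.mpr h1')]
        linarith
      · simp only
        have e : r - (x + y * (v - x) * (r - x) / ((r - v) + y * (v - x)))
            = (r - x) * (r - v) / ((r - v) + y * (v - x)) := by
          field_simp; ring
        rw [e]
        field_simp
        ring
  have hder : ∀ s ∈ Ioo x v, HasDerivWithinAt (fun s => (s - x) * (r - v) / ((v - x) * (r - s)))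
      ((r - v) * (r - x) / ((v - x) * (r - s) ^ 2)) (Ioo x v) s := by
    rintro s ⟨h0, h1'⟩
    have h5 : 0 < r - s := by linarith
    have d1 : HasDerivAt (fun s : ℝ => (s - x) * (r - v)) (1 * (r - v)) s :=
      ((hasDerivAt_id s).sub_const x).mul_const _
    have d2 : HasDerivAt (fun s : ℝ => (v - x) * (r - s)) ((v - x) * (-1)) s :=
      ((hasDerivAt_id s).const_sub r).const_mul _
    have := d1.div d2 (by positivity)
    refine this.hasDerivWithinAt.congr_deriv ?_
    field_simp
    ring
  have hinj : InjOn (fun s => (s - x) * (r - v) / ((v - x) * (r - s))) (Ioo x v) := by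
    rintro s ⟨h0, h1'⟩ t ⟨h0', h1''⟩ hst
    have h5 : 0 < r - s := by linarith
    have h6 : 0 < r - t := by linarith
    simp only at hst
    rw [div_eq_div_iff (by positivity) (by positivity)] at hst
    have : (v - x) * (r - v) * (r - x) * (s - t) = 0 := by linear_combination hst
    have hne : (v - x) * (r - v) * (r - x) ≠ 0 := by positivity
    have := (mul_eq_zero.mp this).resolve_left hne
    linarith
  have key := lintegral_image_eq_lintegral_abs_deriv_mul measurableSet_Ioo hder hinj
    (fun y => ENNReal.ofReal (y ^ (a - 1) * (1 - y) ^ (1 - a - 1)))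
  rw [him, beta01 ha (by linarith)] at key
  rw [mul_comm (ProbabilityTheory.beta a (1 - a)), ENNReal.ofReal_mul (by positivity), key,
    ← lintegral_const_mul' _ _ ENNReal.ofReal_ne_top]
  refine setLIntegral_congr_fun measurableSet_Ioo ?_
  rintro s ⟨h0, h1'⟩
  have h4 : 0 < s - x := by linarith
  have h5 : 0 < r - s := by linarith
  have h6 : 0 < v - s := by linarith
  have e : 1 - (s - x) * (r - v) / ((v - x) * (r - s)) = (v - s) * (r - x) / ((v - x) * (r - s)) := by
    field_simp; ring
  simp only
  rw [e, ← ENNReal.ofReal_mul (by positivity), ← ENNReal.ofReal_mul (by positivity)]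
  congr 1
  rw [abs_of_pos (by positivity), show (1 - a - 1) = -a by ring]
  rw [div_rpow (by positivity) (by positivity), div_rpow (by positivity) (by positivity),
    mul_rpow h4.le h2.le, mul_rpow h1.le h5.le, mul_rpow h6.le h3.le, mul_rpow h1.le h5.le]
  have q : ∀ z : ℝ, 0 < z → z ^ (a - 1) = z ^ a * z⁻¹ := fun z hz => by
    rw [rpow_sub hz, rpow_one, div_eq_mul_inv]
  rw [q _ h3, q _ h4, q _ h2, q _ h1, q _ h5, rpow_neg h1.le, rpow_neg h5.le, rpow_neg h3.le,
    rpow_neg h6.le]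
  field_simp

lemma inner_u {a : ℝ} (ha : 0 < a) {s v r : ℝ} (hsv : s < v) (hvr : v < r) :
    ∫⁻ u in Ioo v r, ENNReal.ofReal ((u - s) ^ (-a - 1) * (r - u) ^ (a - 1))
      = ENNReal.ofReal (a⁻¹ * ((v - s) ^ (-a) * (r - s)⁻¹ * (r - v) ^ a)) := by
  have hrs : 0 < r - s := by linarith
  set F : ℝ → ℝ := fun u => -(a⁻¹ * (r - s)⁻¹) * ((r - u) ^ a * (u - s) ^ (-a)) with hF
  have hcont : ContinuousOn F (Icc v r) := by
    apply ContinuousOn.mul continuousOn_const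
    apply ContinuousOn.mul
    · exact ContinuousOn.rpow_const (by fun_prop) (fun u _ => Or.inr ha.le)
    · refine ContinuousOn.rpow_const (by fun_prop) (fun u hu => Or.inl ?_)
      have := hu.1
      have : 0 < u - s := by linarith
      exact this.ne'
  have hder : ∀ u ∈ Ioo v r, HasDerivAt F ((u - s) ^ (-a - 1) * (r - u) ^ (a - 1)) u := by
    rintro u ⟨h1, h2⟩
    have h3 : 0 < r - u := by linarith
    have h4 : 0 < u - s := by linarith
    have d1 : HasDerivAt (fun u : ℝ => (r - u) ^ a) ((-1) * a * (r - u) ^ (a - 1)) u :=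
      ((hasDerivAt_id u).const_sub r).rpow_const (Or.inl h3.ne')
    have d2 : HasDerivAt (fun u : ℝ => (u - s) ^ (-a)) (1 * (-a) * (u - s) ^ (-a - 1)) u :=
      ((hasDerivAt_id u).sub_const s).rpow_const (Or.inl h4.ne')
    refine ((d1.mul d2).const_mul (-(a⁻¹ * (r - s)⁻¹))).congr_deriv ?_
    have e1 : (r - u) ^ a = (r - u) ^ (a - 1) * (r - u) := by
      rw [← rpow_add_one h3.ne']; ring_nf
    have e2 : (u - s) ^ (-a) = (u - s) ^ (-a - 1) * (u - s) := by
      rw [← rpow_add_one h4.ne']; ring_nf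
    rw [e1, e2]
    field_simp
    ring
  have hnn : ∀ u ∈ Ioo v r, 0 ≤ (u - s) ^ (-a - 1) * (r - u) ^ (a - 1) := by
    rintro u ⟨h1, h2⟩
    have h3 : 0 < r - u := by linarith
    have h4 : 0 < u - s := by linarith
    positivity
  have hfub := intervalIntegral.integrableOn_deriv_of_nonneg hcont hder hnn
  have hval := intervalIntegral.integral_eq_sub_of_hasDerivAt_of_le hvr.le hcont hder
    ((intervalIntegrable_iff_integrableOn_Ioc_of_le hvr.le).mpr hfub)
  rw [intervalIntegral.integral_of_le hvr.le, integral_Ioc_eq_integral_Ioo] at hval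
  rw [← ofReal_integral_eq_lintegral_ofReal (hfub.mono_set Ioo_subset_Ioc_self)
    ((ae_restrict_iff' measurableSet_Ioo).mpr (Filter.Eventually.of_forall hnn)), hval]
  congr 1
  simp only [hF, sub_self, zero_rpow ha.ne']
  ring

/-- the kernel -/
noncomputable def ker (a x r : ℝ) (z : ℝ × ℝ) : ℝ :=
  tpow a (z.1 - x) * tpow (-a) (z.2 - z.1) * tpow a (r - z.2)

lemma ker_nonneg (a x r : ℝ) (z : ℝ × ℝ) : 0 ≤ ker a x r z :=
  mul_nonneg (mul_nonneg (tpow_nonneg _ _) (tpow_nonneg _ _)) (tpow_nonneg _ _)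

/-- indicator of `s < v < u` -/
noncomputable def wgt (z : ℝ × ℝ) (v : ℝ) : ℝ := if z.1 < v ∧ v < z.2 then 1 else 0

lemma wgt_nonneg (z : ℝ × ℝ) (v : ℝ) : 0 ≤ wgt z v := by
  unfold wgt; split_ifs <;> norm_num

lemma measurable_wgt : Measurable (fun q : (ℝ × ℝ) × ℝ => wgt q.1 q.2) := by
  unfold wgt
  refine Measurable.ite ?_ measurable_const measurable_const
  exact (measurableSet_lt (measurable_fst.comp measurable_fst) measurable_snd).inter
    (measurableSet_lt measurable_snd (measurable_snd.comp measurable_fst))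

@[fun_prop]
lemma measurable_wgt' (v : ℝ) : Measurable (fun z : ℝ × ℝ => wgt z v) :=
  measurable_wgt.comp (by fun_prop : Measurable (fun z : ℝ × ℝ => (z, v)))

@[fun_prop]
lemma measurable_ker (a x r : ℝ) : Measurable (ker a x r) := by
  unfold ker; fun_prop

/-- constant -/
noncomputable def kcst (a : ℝ) : ℝ := ProbabilityTheory.beta a (1 - a) * a⁻¹

lemma kcst_pos {a : ℝ} (ha : 0 < a) (ha1 : a < 1) : 0 < kcst a := 
  mul_pos (ProbabilityTheory.beta_pos ha (by linarith)) (inv_pos.mpr ha)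

lemma lintegral_ker_wgt {a : ℝ} (ha : 0 < a) (ha1 : a < 1) (x r v : ℝ) :
    ∫⁻ z : ℝ × ℝ, ENNReal.ofReal (ker a x r z * wgt z v)
      = ENNReal.ofReal ((Ioo x r).indicator (fun _ => kcst a * (r - x) ^ (a - 1)) v) := by
  by_cases hv : v ∈ Ioo x r
  · rw [indicator_of_mem hv]
    obtain ⟨hxv, hvr⟩ := hv
    rw [Measure.volume_eq_prod,
      lintegral_prod _ (by fun_prop)]
    have h1 : ∀ s, ∫⁻ u, ENNReal.ofReal (ker a x r (s, u) * wgt (s, u) v)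
        = (Ioo x v).indicator (fun s => ENNReal.ofReal a⁻¹ * ENNReal.ofReal
          ((s - x) ^ (a - 1) * (v - s) ^ (-a) * (r - s)⁻¹ * (r - v) ^ a)) s := by
      intro s
      by_cases hs : s ∈ Ioo x v
      · rw [indicator_of_mem hs]
        obtain ⟨hs1, hs2⟩ := hs
        have h5 : 0 < s - x := by linarith
        have e := inner_u ha hs2 hvr
        have e3 : ∀ u, ENNReal.ofReal (ker a x r (s, u) * wgt (s, u) v)
          = (Ioo v r).indicator (fun u => ENNReal.ofReal ((s - x) ^ (a - 1)) *
            ENNReal.ofReal ((u - s) ^ (-a - 1) * (r - u) ^ (a - 1))) u := by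
          intro u
          by_cases hu : u ∈ Ioo v r
          · rw [indicator_of_mem hu]
            obtain ⟨hu1, hu2⟩ := hu
            rw [← ENNReal.ofReal_mul (by positivity)]
            simp only [ker, wgt, hs2, hu1, and_self, if_true, mul_one]
            rw [tpow_of_pos h5, tpow_of_pos (by linarith : 0 < u - s),
              tpow_of_pos (by linarith : 0 < r - u), mul_assoc]
          · rw [indicator_of_notMem hu]
            by_cases huv : v < u
            · have : r ≤ u := by by_contra! h; exact hu ⟨huv, h⟩
              simp [ker, tpow_of_nonpos (by linarith : r - u ≤ 0)]
            · simp [wgt, huv]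
        simp_rw [e3]
        rw [lintegral_indicator measurableSet_Ioo, lintegral_const_mul' _ _ ENNReal.ofReal_ne_top, e,
          ← ENNReal.ofReal_mul (by positivity), ← ENNReal.ofReal_mul (by positivity)]
        congr 1
        ring
      · rw [indicator_of_notMem hs]
        rw [lintegral_eq_zero_iff (by fun_prop)]
        refine Filter.Eventually.of_forall fun u => ?_
        by_cases hsv : s < v
        · have : s ≤ x := by by_contra! h; exact hs ⟨h, hsv⟩
          simp [ker, tpow_of_nonpos (by linarith : s - x ≤ 0)]
        · simp [wgt, hsv]
    simp_rw [h1]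
    rw [lintegral_indicator measurableSet_Ioo, lintegral_const_mul' _ _ ENNReal.ofReal_ne_top,
      moebius_beta ha ha1 hxv hvr, ← ENNReal.ofReal_mul (by positivity)]
    congr 1
    rw [kcst]; ring
  · rw [indicator_of_notMem hv, ENNReal.ofReal_zero, lintegral_eq_zero_iff (by fun_prop)]
    refine Filter.Eventually.of_forall fun z => ?_
    simp only [Pi.zero_apply]
    by_cases h1 : z.1 < v ∧ v < z.2
    · by_cases h2 : x < v
      · have : r ≤ v := by by_contra! h; exact hv ⟨h2, h⟩
        simp [ker, tpow_of_nonpos (by linarith [h1.2] : r - z.2 ≤ 0)]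
      · simp [ker, tpow_of_nonpos (by linarith [h1.1] : z.1 - x ≤ 0)]
    · simp [wgt, h1]

lemma integral_ker_wgt {a : ℝ} (ha : 0 < a) (ha1 : a < 1) (x r v : ℝ) :
    ∫ z : ℝ × ℝ, ker a x r z * wgt z v
      = (Ioo x r).indicator (fun _ => kcst a * (r - x) ^ (a - 1)) v := by
  rw [integral_eq_lintegral_of_nonneg_ae (Filter.Eventually.of_forall fun z =>
    mul_nonneg (ker_nonneg _ _ _ _) (wgt_nonneg _ _)) (by fun_prop), lintegral_ker_wgt ha ha1,
    ENNReal.toReal_ofReal]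
  apply indicator_nonneg
  rintro v ⟨h1, h2⟩
  have : 0 < r - x := by linarith
  have := kcst_pos ha ha1
  positivity

lemma integral_ker_deriv {a : ℝ} (ha : 0 < a) (ha1 : a < 1) (x r : ℝ) (p : ℝ → ℝ)
    (hp : Measurable p) (M : ℝ) (hM : ∀ v, |p v| ≤ M) :
    ∫ z : ℝ × ℝ, ker a x r z * (∫ v, wgt z v * p v)
      = kcst a * (r - x) ^ (a - 1) * ∫ v in Ioo x r, p v := by
  have hmeas : Measurable (fun q : (ℝ × ℝ) × ℝ => ker a x r q.1 * (wgt q.1 q.2 * p q.2)) :=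
    ((measurable_ker a x r).comp measurable_fst).mul (measurable_wgt.mul (hp.comp measurable_snd))
  have hfub : Integrable (Function.uncurry fun (z : ℝ × ℝ) (v : ℝ) => ker a x r z * (wgt z v * p v))
      (volume.prod volume) := by
    refine ⟨hmeas.aestronglyMeasurable, ?_⟩
    rw [hasFiniteIntegral_iff_enorm]
    simp only [Function.uncurry_def]
    rw [lintegral_prod_symm _ hmeas.enorm.aemeasurable]
    have hb : ∀ v, ∫⁻ z : ℝ × ℝ, ‖ker a x r z * (wgt z v * p v)‖ₑ ≤
        (Ioo x r).indicator (fun _ => ENNReal.ofReal (kcst a * (r - x) ^ (a - 1)) * ENNReal.ofReal M) v := by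
      intro v
      calc _ = ∫⁻ z : ℝ × ℝ, ENNReal.ofReal (ker a x r z * wgt z v) * ENNReal.ofReal |p v| := by
            congr 1; ext z
            rw [← mul_assoc, enorm_mul, Real.enorm_eq_ofReal_abs, Real.enorm_eq_ofReal_abs,
              abs_of_nonneg (mul_nonneg (ker_nonneg _ _ _ _) (wgt_nonneg _ _))]
        _ = ENNReal.ofReal ((Ioo x r).indicator (fun _ => kcst a * (r - x) ^ (a - 1)) v)
              * ENNReal.ofReal |p v| := by
            rw [lintegral_mul_const' _ _ ENNReal.ofReal_ne_top, lintegral_ker_wgt ha ha1]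
        _ ≤ _ := by
            by_cases hv : v ∈ Ioo x r
            · rw [indicator_of_mem hv, indicator_of_mem hv]
              gcongr; exact hM v
            · rw [indicator_of_notMem hv, indicator_of_notMem hv]; simp
    refine (lintegral_mono hb).trans_lt ?_
    rw [lintegral_indicator measurableSet_Ioo, lintegral_const]
    simp [ENNReal.mul_lt_top]
  have hsw := integral_integral_swap hfub
  calc _ = ∫ z : ℝ × ℝ, ∫ v, ker a x r z * (wgt z v * p v) := by
        simp_rw [integral_const_mul]
    _ = _ := by
        rw [hsw]
        simp_rw [← mul_assoc, integral_mul_const, integral_ker_wgt ha ha1]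
        rw [← integral_const_mul, ← integral_indicator measurableSet_Ioo]
        congr 1; ext v
        by_cases hv : v ∈ Ioo x r
        · simp [hv]
        · simp [hv]

lemma lintegral_three {a b : ℝ} (ha : 0 < a) (hb : 0 < b) (x r : ℝ) :
    ∫⁻ z : ℝ × ℝ, ENNReal.ofReal (tpow a (z.1 - x)) * ENNReal.ofReal (tpow b (z.2 - z.1)) *
        ENNReal.ofReal (tpow a (r - z.2))
      = ENNReal.ofReal (ProbabilityTheory.beta b a) * (ENNReal.ofReal (ProbabilityTheory.beta a (b + a))
        * ENNReal.ofReal (tpow (a + (b + a)) (r - x))) := by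
  rw [Measure.volume_eq_prod, lintegral_prod _ (by fun_prop)]
  simp_rw [mul_assoc]
  calc _ = ∫⁻ s, ENNReal.ofReal (tpow a (s - x)) * (ENNReal.ofReal (ProbabilityTheory.beta b a) *
        ENNReal.ofReal (tpow (b + a) (r - s))) := by
        congr 1; ext s
        rw [lintegral_const_mul' _ _ ENNReal.ofReal_ne_top, lintegral_tpow_mul hb ha]
    _ = _ := by
        simp_rw [mul_left_comm (ENNReal.ofReal (tpow a _))]
        rw [lintegral_const_mul' _ _ ENNReal.ofReal_ne_top, lintegral_tpow_mul ha (by linarith)]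

lemma tpow_mul_rpow (a β t : ℝ) : tpow (-a) t * |t| ^ β = tpow (β - a) t := by
  rcases le_or_gt t 0 with h | h
  · rw [tpow_of_nonpos h, tpow_of_nonpos h, zero_mul]
  · rw [tpow_of_pos h, tpow_of_pos h, abs_of_pos h, ← rpow_add h]
    congr 1; ring

lemma ker_mul_rpow (a β x r : ℝ) (z : ℝ × ℝ) : ker a x r z * |z.2 - z.1| ^ β =
    tpow a (z.1 - x) * tpow (β - a) (z.2 - z.1) * tpow a (r - z.2) := by
  rw [← tpow_mul_rpow, ker]; ring

lemma integrable_ker_rpow {a β : ℝ} (ha : 0 < a) (hβ : a < β) (x r : ℝ) :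
    Integrable (fun z : ℝ × ℝ => ker a x r z * |z.2 - z.1| ^ β) := by
  refine ⟨by fun_prop, ?_⟩
  rw [hasFiniteIntegral_iff_enorm]
  have : ∀ z : ℝ × ℝ, ‖ker a x r z * |z.2 - z.1| ^ β‖ₑ = ENNReal.ofReal (tpow a (z.1 - x)) *
      ENNReal.ofReal (tpow (β - a) (z.2 - z.1)) * ENNReal.ofReal (tpow a (r - z.2)) := by
    intro z
    rw [ker_mul_rpow, enorm_mul, enorm_mul]
    simp only [Real.enorm_eq_ofReal_abs, abs_of_nonneg (tpow_nonneg _ _)]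
  simp_rw [this]
  rw [lintegral_three ha (by linarith)]
  exact ENNReal.mul_lt_top ENNReal.ofReal_lt_top (ENNReal.mul_lt_top ENNReal.ofReal_lt_top ENNReal.ofReal_lt_top)

lemma holder_continuous {β K : ℝ} (hβ : 0 < β) {G : ℝ → ℝ}
    (hG : ∀ s t, |G s - G t| ≤ K * |s - t| ^ β) : Continuous G := by
  rw [continuous_iff_continuousAt]
  intro t
  rw [ContinuousAt, tendsto_iff_dist_tendsto_zero]
  refine squeeze_zero (fun _ => dist_nonneg) (fun s => hG s t) ?_
  have : Continuous (fun s : ℝ => K * |s - t| ^ β) := by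
    apply Continuous.mul continuous_const
    exact Continuous.rpow_const (by fun_prop) (fun _ => Or.inr hβ.le)
  have h := this.tendsto t
  simpa [zero_rpow hβ.ne'] using h

/-- Steklov average -/
noncomputable def stek (G : ℝ → ℝ) (δ x : ℝ) : ℝ := ∫ t in (0:ℝ)..1, G (x + δ * t)

lemma stek_holder {β K δ : ℝ} (hβ : 0 < β) {G : ℝ → ℝ}
    (hG : ∀ s t, |G s - G t| ≤ K * |s - t| ^ β) (s t : ℝ) :
    |stek G δ s - stek G δ t| ≤ K * |s - t| ^ β := by
  have hc := holder_continuous hβ hG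
  unfold stek
  rw [← intervalIntegral.integral_sub (Continuous.intervalIntegrable (by fun_prop) _ _)
    (Continuous.intervalIntegrable (by fun_prop) _ _)]
  have := intervalIntegral.norm_integral_le_of_norm_le_const (a := 0) (b := 1)
    (f := fun q => G (s + δ * q) - G (t + δ * q)) (C := K * |s - t| ^ β) (fun q _ => by
      have := hG (s + δ * q) (t + δ * q)
      simpa using this)
  simpa using this

lemma stek_close {β K δ : ℝ} (hβ : 0 < β) (hδ : 0 < δ) (hK : 0 ≤ K) {G : ℝ → ℝ}
    (hG : ∀ s t, |G s - G t| ≤ K * |s - t| ^ β) (s : ℝ) :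
    |stek G δ s - G s| ≤ K * δ ^ β := by
  have hc := holder_continuous hβ hG
  have e : G s = ∫ t in (0:ℝ)..1, G s := by simp
  unfold stek
  rw [e, ← intervalIntegral.integral_sub (Continuous.intervalIntegrable (by fun_prop) _ _)
    (Continuous.intervalIntegrable (by fun_prop) _ _)]
  have := intervalIntegral.norm_integral_le_of_norm_le_const (a := 0) (b := 1)
    (f := fun q => G (s + δ * q) - G s) (C := K * δ ^ β) (fun q hq => by
      have h := hG (s + δ * q) s
      rw [uIoc_of_le zero_le_one] at hq
      have h0 := hq.1
      have h1 : |s + δ * q - s| ≤ δ := by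
        rw [add_sub_cancel_left, abs_of_pos (by positivity)]
        nlinarith [hq.2]
      rw [Real.norm_eq_abs]
      refine h.trans ?_
      gcongr)
  simpa using this

lemma stek_sub {δ : ℝ} (hδ : 0 < δ) {G : ℝ → ℝ} (hc : Continuous G) (s u : ℝ) :
    stek G δ u - stek G δ s = ∫ v in s..u, (G (v + δ) - G v) / δ := by
  unfold stek
  rw [intervalIntegral.integral_comp_add_mul _ hδ.ne', intervalIntegral.integral_comp_add_mul _ hδ.ne']
  rw [intervalIntegral.integral_div, intervalIntegral.integral_sub
    (Continuous.intervalIntegrable (by fun_prop) _ _) (Continuous.intervalIntegrable (by fun_prop) _ _),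
    intervalIntegral.integral_comp_add_right]
  have hi : ∀ p q : ℝ, IntervalIntegrable G volume p q := fun p q => hc.intervalIntegrable _ _
  have := intervalIntegral.integral_interval_sub_interval_comm (hi u (u + δ)) (hi s (s + δ)) (hi u s)
  simp only [mul_zero, add_zero, mul_one, smul_eq_mul]
  rw [← mul_sub, this, intervalIntegral.integral_symm u s, intervalIntegral.integral_symm (u + δ)]
  field_simp
  ring

lemma integral_ker_holder {a β K : ℝ} (ha : 0 < a) (ha1 : a < 1) (hβ : a < β) (hK : 0 ≤ K) {G : ℝ → ℝ}
    (hG : ∀ s t, |G s - G t| ≤ K * |s - t| ^ β) (x r : ℝ) :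
    ∫ z : ℝ × ℝ, ker a x r z * (G z.2 - G z.1) = kcst a * tpow a (r - x) * (G r - G x) := by
  have hβ0 : 0 < β := by linarith
  have hc := holder_continuous hβ0 hG
  have hker0 : ∀ z : ℝ × ℝ, z.2 ≤ z.1 → ker a x r z = 0 := fun z hz => by
    simp [ker, tpow_of_nonpos (by linarith : z.2 - z.1 ≤ 0)]
  rcases le_or_gt r x with h | h
  · rw [tpow_of_nonpos (by linarith : r - x ≤ 0)]
    have : ∀ z, ker a x r z = 0 := by
      intro z
      rcases le_or_gt z.1 x with h1 | h1
      · simp [ker, tpow_of_nonpos (by linarith : z.1 - x ≤ 0)]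
      rcases le_or_gt z.2 z.1 with h2 | h2
      · exact hker0 z h2
      · simp [ker, tpow_of_nonpos (by linarith : r - z.2 ≤ 0)]
    simp [this]
  rw [tpow_of_pos (by linarith : 0 < r - x)]
  have step : ∀ δ : ℝ, 0 < δ → ∫ z : ℝ × ℝ, ker a x r z * (stek G δ z.2 - stek G δ z.1)
      = kcst a * (r - x) ^ (a - 1) * (stek G δ r - stek G δ x) := by
    intro δ hδ
    have := integral_ker_deriv ha ha1 x r (fun v => (G (v + δ) - G v) / δ)
      (by have := hc.measurable; fun_prop) (K * δ ^ β / δ) (fun v => by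
        rw [abs_div, abs_of_pos hδ]
        gcongr
        have := hG (v + δ) v
        simpa [abs_of_pos hδ] using this)
    rw [stek_sub hδ hc, intervalIntegral.integral_of_le h.le, integral_Ioc_eq_integral_Ioo, ← this]
    congr 1; ext z
    rcases le_or_gt z.2 z.1 with h2 | h2
    · rw [hker0 z h2]; simp
    · rw [stek_sub hδ hc, intervalIntegral.integral_of_le h2.le, integral_Ioc_eq_integral_Ioo,
        ← integral_indicator measurableSet_Ioo]
      congr 2; ext v
      by_cases hv : v ∈ Ioo z.1 z.2
      · rw [indicator_of_mem hv, wgt, if_pos (mem_Ioo.mp hv), one_mul]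
      · rw [indicator_of_notMem hv, wgt, if_neg (fun h => hv (mem_Ioo.mpr h)), zero_mul]
  have hδ : ∀ n : ℕ, (0:ℝ) < 1 / ((n:ℝ) + 1) := fun n => by positivity
  have hlim : ∀ y, Filter.Tendsto (fun n : ℕ => stek G (1 / ((n:ℝ) + 1)) y) Filter.atTop (nhds (G y)) := by
    intro y
    rw [tendsto_iff_dist_tendsto_zero]
    refine squeeze_zero (fun _ => dist_nonneg) (fun n => stek_close hβ0 (hδ n) hK hG y) ?_
    have h1 := (tendsto_one_div_add_atTop_nhds_zero_nat (𝕜 := ℝ)).rpow_const (p := β) (Or.inr hβ0.le)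
    have h2 := h1.const_mul K
    simpa [zero_rpow hβ0.ne'] using h2
  have hL := tendsto_integral_of_dominated_convergence (μ := volume)
    (F := fun (n : ℕ) (z : ℝ × ℝ) => ker a x r z * (stek G (1 / ((n:ℝ) + 1)) z.2 - stek G (1 / ((n:ℝ) + 1)) z.1))
    (f := fun z => ker a x r z * (G z.2 - G z.1))
    (fun z => K * (ker a x r z * |z.2 - z.1| ^ β))
    (fun n => by
      have : Continuous (stek G (1 / ((n:ℝ) + 1))) := holder_continuous hβ0 (stek_holder hβ0 hG)
      have := this.measurable
      apply Measurable.aestronglyMeasurable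
      fun_prop)
    ((integrable_ker_rpow ha hβ x r).const_mul K)
    (fun n => Filter.Eventually.of_forall fun z => by
      rw [norm_mul, Real.norm_eq_abs, Real.norm_eq_abs, abs_of_nonneg (ker_nonneg _ _ _ _),
        mul_left_comm]
      exact mul_le_mul_of_nonneg_left (stek_holder hβ0 hG _ _) (ker_nonneg _ _ _ _))
    (Filter.Eventually.of_forall fun z => ((hlim z.2).sub (hlim z.1)).const_mul _)
  simp_rw [step _ (hδ _)] at hL
  exact tendsto_nhds_unique hL (((hlim r).sub (hlim x)).const_mul _)

lemma tpow_one_sq (t : ℝ) : ENNReal.ofReal (tpow 1 t) ^ 2 = ENNReal.ofReal (tpow 1 t) := by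
  rcases le_or_gt t 0 with h | h
  · simp [tpow_of_nonpos h]
  · simp [tpow_of_pos h]

lemma lint_finite {a T : ℝ} (ha : 0 < a) {p : ℝ → ENNReal} (hp : Measurable p)
    (hi : ∫⁻ r, p r < ⊤) (hs : ∀ r, r ∉ Ioo 0 T → p r = 0) :
    ∫⁻ x in Ioo 0 T, ∫⁻ r, p r * ENNReal.ofReal (tpow a (r - x)) < ⊤ := by
  rw [lintegral_lintegral_swap (by
    apply Measurable.aemeasurable
    simp only [Function.uncurry_def]
    fun_prop)]
  calc _ ≤ ∫⁻ r, p r * (ENNReal.ofReal (ProbabilityTheory.beta 1 a) * ENNReal.ofReal (T ^ a)) := by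
        refine lintegral_mono fun r => ?_
        by_cases hr : r ∈ Ioo 0 T
        · rw [lintegral_const_mul _ (by fun_prop)]
          gcongr
          calc ∫⁻ x in Ioo 0 T, ENNReal.ofReal (tpow a (r - x))
              = ∫⁻ x in Ioo 0 T, ENNReal.ofReal (tpow 1 (x - 0)) * ENNReal.ofReal (tpow a (r - x)) := by
                refine setLIntegral_congr_fun measurableSet_Ioo fun x hx => ?_
                simp only [sub_zero, tpow_of_pos hx.1]
                simp
            _ ≤ ∫⁻ x, ENNReal.ofReal (tpow 1 (x - 0)) * ENNReal.ofReal (tpow a (r - x)) :=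
                setLIntegral_le_lintegral _ _
            _ = _ := lintegral_tpow_mul one_pos ha 0 r
            _ ≤ _ := by
                gcongr
                rw [sub_zero, tpow_of_pos hr.1, add_sub_cancel_left]
                exact rpow_le_rpow hr.1.le hr.2.le ha.le
        · simp [hs r hr]
    _ < ⊤ := by
        rw [lintegral_mul_const' _ _ (ENNReal.mul_ne_top ENNReal.ofReal_ne_top ENNReal.ofReal_ne_top)]
        exact ENNReal.mul_lt_top hi
          (ENNReal.mul_lt_top ENNReal.ofReal_lt_top ENNReal.ofReal_lt_top)

lemma ae_finite {a T : ℝ} (ha : 0 < a) {ψ : ℝ → ℝ} (hψ : Measurable ψ) (hi : Integrable ψ)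
    (hs : ∀ r, r ∉ Ioo 0 T → ψ r = 0) :
    ∀ᵐ x ∂(volume.restrict (Ioo 0 T)), ∫⁻ r, ‖ψ r‖ₑ * ENNReal.ofReal (tpow a (r - x)) < ⊤ := by
  refine ae_lt_top ?_ ?_
  · apply Measurable.lintegral_prod_right'
      (f := fun q : ℝ × ℝ => ‖ψ q.2‖ₑ * ENNReal.ofReal (tpow a (q.2 - q.1)))
    fun_prop
  · exact (lint_finite ha hψ.enorm hi.hasFiniteIntegral (fun r hr => by simp [hs r hr])).ne

/-- fractional integral on the line -/
noncomputable def hfun (a : ℝ) (ψ : ℝ → ℝ) (u : ℝ) : ℝ :=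
  (1 / Real.Gamma a) * ∫ r, ψ r * tpow a (r - u)

/-- correction term -/
noncomputable def nfun (a : ℝ) (ψ G : ℝ → ℝ) (s : ℝ) : ℝ :=
  ∫ u, hfun a ψ u * (G s - G u) * tpow (-a) (u - s)

lemma measurable_hfun (a : ℝ) {ψ : ℝ → ℝ} (hψ : Measurable ψ) : Measurable (hfun a ψ) := by
  unfold hfun
  apply Measurable.const_mul
  have : StronglyMeasurable (fun q : ℝ × ℝ => ψ q.2 * tpow a (q.2 - q.1)) :=
    Measurable.stronglyMeasurable (by fun_prop)
  exact this.integral_prod_right'.measurable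

lemma measurable_nfun (a : ℝ) {ψ G : ℝ → ℝ} (hψ : Measurable ψ) (hG : Measurable G) :
    Measurable (nfun a ψ G) := by
  unfold nfun
  have hh := measurable_hfun a hψ
  have : StronglyMeasurable (fun q : ℝ × ℝ => hfun a ψ q.2 * (G q.1 - G q.2) * tpow (-a) (q.2 - q.1)) :=
    Measurable.stronglyMeasurable (by fun_prop)
  exact this.integral_prod_right'.measurable

lemma enorm_nfun_le {a β K : ℝ} (ha : 0 < a) (hβ : a < β) (hK : 0 ≤ K) {G ψ : ℝ → ℝ}
    (hψ : Measurable ψ) (hG : ∀ s t, |G s - G t| ≤ K * |s - t| ^ β) (s : ℝ) :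
    ‖nfun a ψ G s‖ₑ ≤ ENNReal.ofReal (1 / Real.Gamma a) * ENNReal.ofReal K *
      ENNReal.ofReal (ProbabilityTheory.beta (β - a) a) *
        ∫⁻ r, ‖ψ r‖ₑ * ENNReal.ofReal (tpow β (r - s)) := by
  have hΓ := Real.Gamma_pos_of_pos ha
  have h1 : ∀ u, ‖hfun a ψ u * (G s - G u) * tpow (-a) (u - s)‖ₑ ≤
      (ENNReal.ofReal (1 / Real.Gamma a) * ENNReal.ofReal K) * 
      ∫⁻ r, ‖ψ r‖ₑ * (ENNReal.ofReal (tpow (β - a) (u - s)) * ENNReal.ofReal (tpow a (r - u))) := by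
    intro u
    have e1 : ‖hfun a ψ u‖ₑ ≤ ENNReal.ofReal (1 / Real.Gamma a) *
        ∫⁻ r, ‖ψ r‖ₑ * ENNReal.ofReal (tpow a (r - u)) := by
      unfold hfun
      rw [enorm_mul, Real.enorm_eq_ofReal (by positivity)]
      gcongr
      refine (enorm_integral_le_lintegral_enorm _).trans (le_of_eq ?_)
      congr 1; ext r
      rw [enorm_mul, Real.enorm_eq_ofReal (tpow_nonneg _ _)]
    have e2 : ‖(G s - G u) * tpow (-a) (u - s)‖ₑ ≤ ENNReal.ofReal K * ENNReal.ofReal (tpow (β - a) (u - s)) := by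
      rw [← ENNReal.ofReal_mul hK, Real.enorm_eq_ofReal_abs, abs_mul, abs_of_nonneg (tpow_nonneg _ _),
        ← tpow_mul_rpow]
      apply ENNReal.ofReal_le_ofReal
      have := hG s u
      rw [abs_sub_comm s u] at this
      calc _ ≤ K * |u - s| ^ β * tpow (-a) (u - s) :=
            mul_le_mul_of_nonneg_right this (tpow_nonneg _ _)
        _ = _ := by ring
    rw [mul_assoc, enorm_mul]
    refine (mul_le_mul' e1 e2).trans (le_of_eq ?_)
    simp_rw [mul_left_comm (‖ψ _‖ₑ)]
    rw [lintegral_const_mul' _ _ ENNReal.ofReal_ne_top]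
    ring
  unfold nfun
  refine (enorm_integral_le_lintegral_enorm _).trans ((lintegral_mono h1).trans (le_of_eq ?_))
  rw [lintegral_const_mul' _ _ (ENNReal.mul_ne_top ENNReal.ofReal_ne_top ENNReal.ofReal_ne_top),
    lintegral_lintegral_swap (by
      apply Measurable.aemeasurable
      simp only [Function.uncurry_def]
      fun_prop), mul_assoc (_ * _)]
  congr 1
  rw [← lintegral_const_mul' _ _ ENNReal.ofReal_ne_top]
  congr 1; ext r
  rw [lintegral_const_mul' _ _ enorm_ne_top, lintegral_tpow_mul (by linarith) ha, sub_add_cancel]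
  ring

lemma nfun_identity {a β K : ℝ} (ha : 0 < a) (ha1 : a < 1) (hβ : a < β) (hK : 0 ≤ K) {G ψ : ℝ → ℝ}
    (hψ : Measurable ψ) (hG : ∀ s t, |G s - G t| ≤ K * |s - t| ^ β) (x : ℝ)
    (hx : ∫⁻ r, ‖ψ r‖ₑ * ENNReal.ofReal (tpow (a + (β - a + a)) (r - x)) < ⊤) :
    Integrable (fun s => tpow a (s - x) * nfun a ψ G s) ∧
    ∫ s, tpow a (s - x) * nfun a ψ G s =
      -((1 / Real.Gamma a) * kcst a) * ∫ r, ψ r * tpow a (r - x) * (G r - G x) := by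
  have hΓ := Real.Gamma_pos_of_pos ha
  have hGm := (holder_continuous (by linarith) hG).measurable
  have hmeas : Measurable (fun q : (ℝ × ℝ) × ℝ => ψ q.2 * (ker a x q.2 q.1 * (G q.1.1 - G q.1.2))) := by
    unfold ker; fun_prop
  have hfub : Integrable (Function.uncurry fun (z : ℝ × ℝ) (r : ℝ) => ψ r * (ker a x r z * (G z.1 - G z.2)))
      (volume.prod volume) := by
    refine ⟨hmeas.aestronglyMeasurable, ?_⟩
    rw [hasFiniteIntegral_iff_enorm]
    simp only [Function.uncurry_def]
    rw [lintegral_prod_symm _ hmeas.enorm.aemeasurable]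
    set c := ENNReal.ofReal K * (ENNReal.ofReal (ProbabilityTheory.beta (β - a) a) *
      ENNReal.ofReal (ProbabilityTheory.beta a (β - a + a))) with hc
    have hb : ∀ r, ∫⁻ z : ℝ × ℝ, ‖ψ r * (ker a x r z * (G z.1 - G z.2))‖ₑ ≤
        c * (‖ψ r‖ₑ * ENNReal.ofReal (tpow (a + (β - a + a)) (r - x))) := by
      intro r
      calc _ ≤ ∫⁻ z : ℝ × ℝ, (‖ψ r‖ₑ * ENNReal.ofReal K) * (ENNReal.ofReal (tpow a (z.1 - x)) *
              ENNReal.ofReal (tpow (β - a) (z.2 - z.1)) * ENNReal.ofReal (tpow a (r - z.2))) := by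
            refine lintegral_mono fun z => ?_
            rw [enorm_mul, mul_assoc (‖ψ r‖ₑ)]
            gcongr
            rw [← ENNReal.ofReal_mul (tpow_nonneg _ _),
              ← ENNReal.ofReal_mul (mul_nonneg (tpow_nonneg _ _) (tpow_nonneg _ _)),
              ← ENNReal.ofReal_mul hK, ← ker_mul_rpow, Real.enorm_eq_ofReal_abs, abs_mul,
              abs_of_nonneg (ker_nonneg _ _ _ _)]
            apply ENNReal.ofReal_le_ofReal
            have := hG z.1 z.2
            rw [abs_sub_comm z.1 z.2] at this
            calc _ ≤ ker a x r z * (K * |z.2 - z.1| ^ β) :=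
                  mul_le_mul_of_nonneg_left this (ker_nonneg _ _ _ _)
              _ = _ := by ring
        _ = _ := by
            rw [lintegral_const_mul' _ _ (ENNReal.mul_ne_top enorm_ne_top ENNReal.ofReal_ne_top),
              lintegral_three ha (by linarith), hc]
            ring
    refine (lintegral_mono hb).trans_lt ?_
    have hct : c ≠ ⊤ := ENNReal.mul_ne_top ENNReal.ofReal_ne_top
      (ENNReal.mul_ne_top ENNReal.ofReal_ne_top ENNReal.ofReal_ne_top)
    rw [lintegral_const_mul' _ _ hct]
    exact ENNReal.mul_lt_top hct.lt_top hx
  have hsw := integral_integral_swap hfub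
  have hH := hfub.integral_prod_left
  have eH : ∀ z : ℝ × ℝ, ∫ r, ψ r * (ker a x r z * (G z.1 - G z.2)) =
      Real.Gamma a * (tpow a (z.1 - x) * (hfun a ψ z.2 * (G z.1 - G z.2) * tpow (-a) (z.2 - z.1))) := by
    intro z
    have : ∀ r, ψ r * (ker a x r z * (G z.1 - G z.2)) =
      (tpow a (z.1 - x) * (G z.1 - G z.2) * tpow (-a) (z.2 - z.1)) * (ψ r * tpow a (r - z.2)) := by
      intro r; rw [ker]; ring
    simp_rw [this]
    rw [integral_const_mul, hfun]
    field_simp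
  simp only [Function.uncurry_apply_pair] at hH
  simp_rw [eH] at hH hsw
  have eN : ∀ s, ∫ u, Real.Gamma a * (tpow a (s - x) * (hfun a ψ u * (G s - G u) * tpow (-a) (u - s)))
      = Real.Gamma a * (tpow a (s - x) * nfun a ψ G s) := by
    intro s
    rw [integral_const_mul, integral_const_mul, nfun]
  constructor
  · rw [Measure.volume_eq_prod] at hH
    have := hH.integral_prod_left
    simp_rw [eN] at this
    have h2 := this.const_mul (Real.Gamma a)⁻¹
    refine h2.congr (Filter.Eventually.of_forall fun s => ?_)
    simp only
    field_simp
  · rw [Measure.volume_eq_prod] at hH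
    have h3 := integral_prod _ hH
    rw [← Measure.volume_eq_prod] at h3
    rw [h3] at hsw
    simp only [eN] at hsw
    have e5 : ∀ r, ∫ z : ℝ × ℝ, ψ r * (ker a x r z * (G z.1 - G z.2)) =
        -kcst a * (ψ r * tpow a (r - x) * (G r - G x)) := by
      intro r
      rw [integral_const_mul]
      have := integral_ker_holder ha ha1 hβ hK hG x r
      have e6 : ∀ z : ℝ × ℝ, ker a x r z * (G z.1 - G z.2) = -(ker a x r z * (G z.2 - G z.1)) :=
        fun z => by ring
      simp_rw [e6]
      rw [integral_neg, this]
      ring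
    simp_rw [e5] at hsw
    rw [integral_const_mul, integral_const_mul] at hsw
    field_simp
    linarith

lemma young {β T : ℝ} (hβ : 0 < β) {p : ℝ → ENNReal} (hp : Measurable p)
    (hs : ∀ r, r ∉ Ioo 0 T → p r = 0) (hi : ∫⁻ r, p r ^ 2 < ⊤) :
    ∫⁻ s in Ioo 0 T, (∫⁻ r, p r * ENNReal.ofReal (tpow β (r - s))) ^ 2 < ⊤ := by
  set c := ENNReal.ofReal (ProbabilityTheory.beta β 1) * ENNReal.ofReal (T ^ β) with hc
  have hct : c ≠ ⊤ := ENNReal.mul_ne_top ENNReal.ofReal_ne_top ENNReal.ofReal_ne_top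
  have hk : ∀ t, ENNReal.ofReal (√(tpow β t)) ^ 2 = ENNReal.ofReal (tpow β t) := fun t => by
    rw [← ENNReal.ofReal_pow (sqrt_nonneg _), sq_sqrt (tpow_nonneg _ _)]
  have h1 : ∀ s ∈ Ioo 0 T, (∫⁻ r, p r * ENNReal.ofReal (tpow β (r - s))) ^ 2 ≤
      c * ∫⁻ r, p r ^ 2 * ENNReal.ofReal (tpow β (r - s)) := by
    intro s hs'
    have hCS := ENNReal.lintegral_mul_le_Lp_mul_Lq volume Real.HolderConjugate.two_two
      (f := fun r => p r * ENNReal.ofReal (√(tpow β (r - s))))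
      (g := fun r => ENNReal.ofReal (√(tpow β (r - s))) * ENNReal.ofReal (tpow 1 (T - r)))
      (by fun_prop) (by fun_prop)
    simp only [Pi.mul_apply, ENNReal.rpow_two, mul_pow, hk, tpow_one_sq] at hCS
    rw [lintegral_tpow_mul hβ one_pos] at hCS
    have e : ∫⁻ r, p r * ENNReal.ofReal (tpow β (r - s)) = ∫⁻ r, p r * ENNReal.ofReal (√(tpow β (r - s))) *
        (ENNReal.ofReal (√(tpow β (r - s))) * ENNReal.ofReal (tpow 1 (T - r))) := by
      congr 1; ext r
      by_cases hr : r ∈ Ioo 0 T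
      · rw [← hk, tpow_of_pos (by linarith [hr.2] : 0 < T - r)]
        simp
        ring
      · simp [hs r hr]
    rw [e]
    refine (pow_le_pow_left' hCS 2).trans ?_
    rw [mul_pow, ← ENNReal.rpow_two, ← ENNReal.rpow_two, ← ENNReal.rpow_mul, ← ENNReal.rpow_mul]
    norm_num
    rw [mul_comm]
    gcongr
    rw [hc]
    gcongr
    rw [tpow_of_pos (by linarith [hs'.2]), add_sub_cancel_right]
    exact rpow_le_rpow (by linarith [hs'.2]) (by linarith [hs'.1]) hβ.le
  refine (setLIntegral_mono' measurableSet_Ioo h1).trans_lt ?_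
  rw [lintegral_const_mul' _ _ hct]
  exact ENNReal.mul_lt_top hct.lt_top
    (lint_finite hβ (hp.pow_const 2) hi (fun r hr => by simp [hs r hr]))

lemma setIntegral_tpow {a T : ℝ} {χ χ' : ℝ → ℝ} (b : ℝ)
    (hχ : ∀ᵐ s ∂(volume.restrict (Ioo 0 T)), χ s = χ' s) (h0 : ∀ s, T ≤ s → χ' s = 0)
    {u : ℝ} (hu : 0 < u) (hb : b = a - 1) :
    ∫ s in Ioo u T, χ s * (s - u) ^ b = ∫ s, χ' s * tpow a (s - u) := by
  subst hb
  have h1 : ∫ s in Ioo u T, χ s * (s - u) ^ (a - 1) = ∫ s in Ioo u T, χ' s * tpow a (s - u) := by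
    apply integral_congr_ae
    have h2 := ae_restrict_of_ae_restrict_of_subset (Ioo_subset_Ioo_left hu.le) hχ
    filter_upwards [h2, ae_restrict_mem measurableSet_Ioo] with s hs hm
    rw [hs, tpow_of_pos (by linarith [hm.1])]
  rw [h1, ← integral_indicator measurableSet_Ioo]
  congr 1; ext s
  by_cases hs : s ∈ Ioo u T
  · rw [indicator_of_mem hs]
  · rw [indicator_of_notMem hs]
    rcases le_or_gt s u with h | h
    · rw [tpow_of_nonpos (by linarith), mul_zero]
    · rw [h0 s (by by_contra! h'; exact hs ⟨h, h'⟩), zero_mul]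

lemma hfun_zero {a T : ℝ} {ψ : ℝ → ℝ} (hs : ∀ r, r ∉ Ioo 0 T → ψ r = 0) {u : ℝ} (hu : T ≤ u) :
    hfun a ψ u = 0 := by
  unfold hfun
  have : ∀ r, ψ r * tpow a (r - u) = 0 := by
    intro r
    by_cases hr : r ∈ Ioo 0 T
    · rw [tpow_of_nonpos (by linarith [hr.2]), mul_zero]
    · rw [hs r hr, zero_mul]
  simp [this]

lemma nfun_zero {a T : ℝ} {ψ G : ℝ → ℝ} (hs : ∀ r, r ∉ Ioo 0 T → ψ r = 0) {s : ℝ} (hu : T ≤ s) :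
    nfun a ψ G s = 0 := by
  unfold nfun
  have : ∀ u, hfun a ψ u * (G s - G u) * tpow (-a) (u - s) = 0 := by
    intro u
    rcases le_or_gt u s with h | h
    · rw [tpow_of_nonpos (by linarith), mul_zero]
    · rw [hfun_zero hs (by linarith), zero_mul, zero_mul]
  simp [this]

lemma nfun_memLp {α β K T : ℝ} (ha : 0 < α) (hβ : α < β) (hK : 0 ≤ K) {G p : ℝ → ℝ}
    (hp : Measurable p) (hps : ∀ r, r ∉ Ioo 0 T → p r = 0) (hp2 : MemLp p 2 volume)
    (hG : ∀ s t, |G s - G t| ≤ K * |s - t| ^ β) :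
    MemLp (fun s => s ^ α * nfun α (fun r => r ^ (-α) * p r) G s) 2 (volume.restrict (Ioo 0 T)) := by
  have hGm := (holder_continuous (by linarith) hG).measurable
  have hψ : Measurable (fun r => r ^ (-α) * p r) := by fun_prop
  have hN := measurable_nfun α hψ hGm
  refine ⟨by fun_prop, ?_⟩
  rw [eLpNorm_lt_top_iff_lintegral_rpow_enorm_lt_top (by norm_num) (by norm_num)]
  simp only [ENNReal.toReal_ofNat, ENNReal.rpow_two]
  set c := ENNReal.ofReal (1 / Real.Gamma α) * ENNReal.ofReal K *
      ENNReal.ofReal (ProbabilityTheory.beta (β - α) α) with hc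
  have hct : c ≠ ⊤ := ENNReal.mul_ne_top (ENNReal.mul_ne_top ENNReal.ofReal_ne_top
    ENNReal.ofReal_ne_top) ENNReal.ofReal_ne_top
  have h1 : ∀ s ∈ Ioo 0 T, ‖s ^ α * nfun α (fun r => r ^ (-α) * p r) G s‖ₑ ^ 2 ≤
      c ^ 2 * (∫⁻ r, ‖p r‖ₑ * ENNReal.ofReal (tpow β (r - s))) ^ 2 := by
    intro s hs
    rw [← mul_pow]
    gcongr
    rw [enorm_mul]
    refine (mul_le_mul_right (enorm_nfun_le ha hβ hK hψ hG s) _).trans ?_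
    rw [← hc, mul_left_comm]
    gcongr
    rw [← lintegral_const_mul' _ _ enorm_ne_top]
    refine lintegral_mono fun r => ?_
    rcases le_or_gt r s with h | h
    · simp [tpow_of_nonpos (by linarith : r - s ≤ 0)]
    · have hs0 := hs.1
      have hr0 : 0 < r := by linarith
      rw [← mul_assoc]
      gcongr
      rw [enorm_mul, ← mul_assoc]
      refine mul_le_of_le_one_left' ?_
      rw [← enorm_mul, Real.enorm_eq_ofReal (by positivity), ← ENNReal.ofReal_one]
      apply ENNReal.ofReal_le_ofReal
      rw [rpow_neg hr0.le, ← div_eq_mul_inv, div_le_one (by positivity)]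
      exact rpow_le_rpow hs0.le h.le ha.le
  refine (setLIntegral_mono' measurableSet_Ioo h1).trans_lt ?_
  rw [lintegral_const_mul' _ _ (ENNReal.pow_ne_top hct)]
  refine ENNReal.mul_lt_top (ENNReal.pow_ne_top hct).lt_top (young (by linarith) hp.enorm
    (fun r hr => by simp [hps r hr]) ?_)
  have h2 := hp2.2
  rw [eLpNorm_lt_top_iff_lintegral_rpow_enorm_lt_top (by norm_num) (by norm_num)] at h2
  simpa using h2

lemma psi_integrable {α T : ℝ} (hT : 0 < T) (ha1 : α < 1 / 2) {p : ℝ → ℝ}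
    (hp : Measurable p) (hps : ∀ r, r ∉ Ioo 0 T → p r = 0) (hp2 : MemLp p 2 volume) :
    Integrable (fun r => r ^ (-α) * p r) := by
  have h1 : IntegrableOn (fun r : ℝ => r ^ (-(2 * α))) (Ioo 0 T) := by
    have := intervalIntegral.intervalIntegrable_rpow' (a := 0) (b := T) (r := -(2 * α)) (by linarith)
    rw [intervalIntegrable_iff_integrableOn_Ioo_of_le hT.le] at this
    exact this
  refine ((h1.integrable_indicator measurableSet_Ioo).add hp2.integrable_sq).mono' (by fun_prop) ?_
  refine Filter.Eventually.of_forall fun r => ?_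
  by_cases hr : r ∈ Ioo 0 T
  · simp only [Pi.add_apply, indicator_of_mem hr]
    have hr0 := hr.1
    have e : r ^ (-(2 * α)) = (r ^ (-α)) ^ 2 := by
      rw [← rpow_natCast, ← rpow_mul hr0.le]; congr 1; push_cast; ring
    rw [e, norm_mul, Real.norm_eq_abs, Real.norm_eq_abs, ← sq_abs (p r), ← sq_abs (r ^ (-α))]
    nlinarith [sq_nonneg (|r ^ (-α)| - |p r|), sq_nonneg (|r ^ (-α)|), sq_nonneg (|p r|)]
  · simp [hps r hr, indicator_of_notMem hr]

lemma final_identity {α β K T : ℝ} (ha : 0 < α) (ha1 : α < 1) (hβ : α < β) (hK : 0 ≤ K) {G ψ : ℝ → ℝ}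
    (hψ : Measurable ψ) (hψi : Integrable ψ) (hψs : ∀ r, r ∉ Ioo 0 T → ψ r = 0)
    (hG : ∀ s t, |G s - G t| ≤ K * |s - t| ^ β) (M : ℝ) (hM : ∀ t, |G t| ≤ M) :
    ∀ᵐ x ∂(volume.restrict (Ioo 0 T)),
      ∫ s, (G s * ψ s + α / Real.Gamma (1 - α) * nfun α ψ G s) * tpow α (s - x) =
        G x * ∫ r, ψ r * tpow α (r - x) := by
  have hGm := (holder_continuous (by linarith) hG).measurable
  filter_upwards [ae_finite ha hψ hψi hψs,
    ae_finite (by linarith : 0 < α + (β - α + α)) hψ hψi hψs] with x h1 h2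
  obtain ⟨hNi, hN⟩ := nfun_identity ha ha1 hβ hK hψ hG x h2
  have i1 : Integrable (fun r => ψ r * tpow α (r - x)) := by
    refine ⟨by fun_prop, ?_⟩
    rw [hasFiniteIntegral_iff_enorm]
    simpa only [enorm_mul, Real.enorm_eq_ofReal (tpow_nonneg _ _)] using h1
  have i2 : Integrable (fun r => G r * (ψ r * tpow α (r - x))) :=
    i1.bdd_mul hGm.aestronglyMeasurable (Filter.Eventually.of_forall hM)
  have e1 : ∀ s, (G s * ψ s + α / Real.Gamma (1 - α) * nfun α ψ G s) * tpow α (s - x) =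
      G s * (ψ s * tpow α (s - x)) + α / Real.Gamma (1 - α) * (tpow α (s - x) * nfun α ψ G s) :=
    fun s => by ring
  have e2 : ∀ r, ψ r * tpow α (r - x) * (G r - G x) =
      G r * (ψ r * tpow α (r - x)) - G x * (ψ r * tpow α (r - x)) := fun r => by ring
  simp_rw [e1]
  rw [integral_add i2 (hNi.const_mul _), integral_const_mul, hN]
  simp_rw [e2]
  rw [integral_sub i2 (i1.const_mul _), integral_const_mul]
  have g1 := Real.Gamma_pos_of_pos ha
  have g2 := Real.Gamma_pos_of_pos (by linarith : 0 < 1 - α)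
  have hk : kcst α = Real.Gamma α * Real.Gamma (1 - α) / α := by
    rw [kcst, ProbabilityTheory.beta, add_sub_cancel, Real.Gamma_one]; field_simp
  rw [hk]
  field_simp
  ring

/-- Lemma 2.4 (explicit representative): if `f ∈ Λ^α_T` with representative `φ_f` and `g`
is Hölder continuous with exponent `β > α`, then
`s ↦ g(s)φ_f(s) + (α s^α/Γ(1-α)) ∫_s^T u^{-α} f(u)(g(s)-g(u))(u-s)^{-1-α} du`
belongs to `L²([0,T])` and is the representative of `g·f ∈ Λ^α_T`. -/
theorem holder_mul_memLambda_rep (T α β : ℝ) (hT : 0 < T)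
    (hα : α ∈ Set.Ioo (0 : ℝ) (1 / 2)) (hβ : α < β)
    (f φ : ℝ → ℝ) (hf : memLambda T α f φ)
    (g : ℝ → ℝ) (K : ℝ)
    (hg : ∀ s ∈ Set.Icc (0 : ℝ) T, ∀ t ∈ Set.Icc (0 : ℝ) T, |g s - g t| ≤ K * |s - t| ^ β) :
    memLambda T α (fun u => g u * f u)
      (fun s => g s * φ s + (α * s ^ α / Real.Gamma (1 - α)) *
        ∫ u in Set.Ioo s T, u ^ (-α) * f u * (g s - g u) * (u - s) ^ (-1 - α)) := by
  obtain ⟨ha, ha12⟩ := hα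
  have ha1 : α < 1 := by linarith
  have hβ0 : 0 < β := by linarith
  have hK : 0 ≤ K := by
    have h := (abs_nonneg _).trans (hg 0 ⟨le_rfl, hT.le⟩ T ⟨hT.le, le_rfl⟩)
    have h2 : 0 < |0 - T| ^ β := by
      rw [zero_sub, abs_neg, abs_of_pos hT]; positivity
    exact nonneg_of_mul_nonneg_left h h2
  obtain ⟨hφ, hfφ⟩ := hf
  have hμ : volume.restrict (Icc 0 T) = volume.restrict (Ioo 0 T) :=
    (Measure.restrict_congr_set Ioo_ae_eq_Icc).symm
  unfold memLambda
  rw [hμ] at hφ hfφ ⊢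
  -- the extension of g
  set G : ℝ → ℝ := fun t => g (projIcc 0 T hT.le t) with hGdef
  have hGg : ∀ t ∈ Ioo 0 T, G t = g t := fun t ht => by
    simp only [hGdef]
    rw [projIcc_of_mem hT.le (Ioo_subset_Icc_self ht)]
  have hG : ∀ s t, |G s - G t| ≤ K * |s - t| ^ β := fun s t => by
    refine (hg _ (projIcc 0 T hT.le s).2 _ (projIcc 0 T hT.le t).2).trans ?_
    exact mul_le_mul_of_nonneg_left
      (rpow_le_rpow (abs_nonneg _) (abs_projIcc_sub_projIcc hT.le) hβ0.le) hK
  have hGm := (holder_continuous hβ0 hG).measurable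
  have hM : ∀ t, |G t| ≤ |g 0| + K * T ^ β := fun t => by
    have h1 := hg _ (projIcc 0 T hT.le t).2 0 ⟨le_rfl, hT.le⟩
    have h3 : |G t| - |g 0| ≤ |G t - g 0| := abs_sub_abs_le_abs_sub _ _
    have h4 : K * |(projIcc 0 T hT.le t : ℝ) - 0| ^ β ≤ K * T ^ β := by
      gcongr
      rw [sub_zero, abs_of_nonneg (projIcc 0 T hT.le t).2.1]
      exact (projIcc 0 T hT.le t).2.2
    have h5 : |G t - g 0| ≤ K * |(projIcc 0 T hT.le t : ℝ) - 0| ^ β := h1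
    linarith
  -- measurable representative
  set p : ℝ → ℝ := (Ioo 0 T).indicator (hφ.1.mk φ) with hpdef
  have hp : Measurable p := hφ.1.stronglyMeasurable_mk.measurable.indicator measurableSet_Ioo
  have hps : ∀ r, r ∉ Ioo 0 T → p r = 0 := fun r hr => indicator_of_notMem hr _
  have hp2 : MemLp p 2 volume := by
    rw [hpdef, memLp_indicator_iff_restrict measurableSet_Ioo]
    exact hφ.ae_eq hφ.1.ae_eq_mk
  have hpφ : ∀ᵐ s ∂(volume.restrict (Ioo 0 T)), φ s = p s := by
    filter_upwards [hφ.1.ae_eq_mk, ae_restrict_mem measurableSet_Ioo] with s hs hm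
    rw [hpdef, indicator_of_mem hm, hs]
  set ψ : ℝ → ℝ := fun r => r ^ (-α) * p r with hψdef
  have hψ : Measurable ψ := by fun_prop
  have hψs : ∀ r, r ∉ Ioo 0 T → ψ r = 0 := fun r hr => by simp [hψdef, hps r hr]
  have hψi : Integrable ψ := psi_integrable hT ha12 hp hps hp2
  have hψφ : ∀ᵐ s ∂(volume.restrict (Ioo 0 T)), s ^ (-α) * φ s = ψ s := by
    filter_upwards [hpφ] with s hs
    rw [hs]
  have hfh : ∀ᵐ u ∂(volume.restrict (Ioo 0 T)), f u = u ^ α * hfun α ψ u := by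
    filter_upwards [hfφ, ae_restrict_mem measurableSet_Ioo] with u hu hm
    rw [hu, fracInt, hfun, setIntegral_tpow _ hψφ (fun s hs => hψs s (fun h => by linarith [h.2])) hm.1 rfl]
  have hcancel : ∀ u : ℝ, 0 < u → u ^ (-α) * u ^ α = 1 := fun u hu => by
    rw [← rpow_add hu, neg_add_cancel, rpow_zero]
  have hinner : ∀ s ∈ Ioo 0 T, ∫ u in Ioo s T, u ^ (-α) * f u * (g s - g u) * (u - s) ^ (-1 - α)
      = nfun α ψ G s := by
    intro s hs
    rw [nfun]
    refine setIntegral_tpow (χ := fun u => u ^ (-α) * f u * (g s - g u))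
      (χ' := fun u => hfun α ψ u * (G s - G u)) (-1 - α) ?_ ?_ hs.1 (by ring)
    · filter_upwards [hfh, ae_restrict_mem measurableSet_Ioo] with u hu hm
      rw [hu, hGg s hs, hGg u hm, ← mul_assoc, hcancel u hm.1, one_mul]
    · intro u hu
      rw [hfun_zero hψs hu, zero_mul]
  set χ : ℝ → ℝ := fun s => G s * ψ s + α / Real.Gamma (1 - α) * nfun α ψ G s with hχdef
  have hΦ : ∀ᵐ s ∂(volume.restrict (Ioo 0 T)), g s * φ s + (α * s ^ α / Real.Gamma (1 - α)) *
        ∫ u in Set.Ioo s T, u ^ (-α) * f u * (g s - g u) * (u - s) ^ (-1 - α) =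
      G s * p s + α / Real.Gamma (1 - α) * (s ^ α * nfun α ψ G s) := by
    filter_upwards [hpφ, ae_restrict_mem measurableSet_Ioo] with s hs hm
    rw [hinner s hm, hs, hGg s hm]
    ring
  constructor
  · refine MemLp.ae_eq (Filter.EventuallyEq.symm hΦ) ?_
    refine MemLp.add ?_ ((nfun_memLp ha hβ hK hp hps hp2 hG).const_mul _)
    refine (hp2.restrict (Ioo 0 T)).of_le_mul (c := |g 0| + K * T ^ β) (by fun_prop) ?_
    refine Filter.Eventually.of_forall fun s => ?_
    rw [norm_mul]
    exact mul_le_mul_of_nonneg_right (hM s) (norm_nonneg _)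
  · have hχ : ∀ᵐ s ∂(volume.restrict (Ioo 0 T)), s ^ (-α) * (g s * φ s +
        (α * s ^ α / Real.Gamma (1 - α)) *
        ∫ u in Set.Ioo s T, u ^ (-α) * f u * (g s - g u) * (u - s) ^ (-1 - α)) = χ s := by
      filter_upwards [hΦ, ae_restrict_mem measurableSet_Ioo] with s hs hm
      rw [hs]
      simp only [hχdef, hψdef]
      linear_combination (α / Real.Gamma (1 - α) * nfun α ψ G s) * hcancel s hm.1
    have hχ0 : ∀ s, T ≤ s → χ s = 0 := fun s hs => by
      simp only [hχdef]
      rw [nfun_zero hψs hs, hψs s (fun h => by linarith [h.2])]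
      ring
    filter_upwards [hfh, final_identity ha ha1 hβ hK hψ hψi hψs hG _ hM,
      ae_restrict_mem measurableSet_Ioo] with u hu hid hm
    rw [fracInt, setIntegral_tpow _ hχ hχ0 hm.1 rfl]
    simp only [hχdef]
    rw [hid, hu, hGg u hm, hfun]
    ring
end

section
/- Let a ∈ L²([0,T]) and e(t) = exp(∫_0^t a(s) ds). Let n ≥ 2, s = (s_1,…,s_n) ∈ [0,T]^n, 1 ≤ j ≤ n, let i_1 < ⋯ < i_j be indices in {1,…,n}, and let u_{i_k} ∈ [s_{i_k}, T] for k = 1,…,j. For each subset S ⊆ {i_1,…,i_j} define v^S ∈ [0,T]^n by v^S_i = u_i if i ∈ S and v^S_i = s_i otherwise. Then Σ_{S ⊆ {i_1,…,i_j}} (-1)^{|S|} e(max_{1≤i≤n} v^S_i) equals e(max_{1≤i≤n} s_i) − e(min_{1≤k≤j} u_{i_k}) if u_{i_k} ≥ max_{1≤i≤n} s_i for every k = 1,…,j, and equals 0 otherwise. -/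
open MeasureTheory Real Set
open scoped Classical

/-- Lemma 4.4.1: alternating-sum identity for `e(t) = exp(∫_0^t a(s) ds)`.
For `s ∈ [0,T]^n`, a nonempty index set `J` and `u_i ∈ [s_i,T]` for `i ∈ J`, the sum over
subsets `S ⊆ J` of `(-1)^{|S|} e(max_i v^S_i)` (where `v^S` replaces `s_i` by `u_i` for
`i ∈ S`) equals `e(max s) - e(min_{i∈J} u_i)` if all `u_i ≥ max s`, and `0` otherwise. -/
theorem alternating_sum_exp (T : ℝ) (hT : 0 < T) (a : ℝ → ℝ)
    (ha : MemLp a 2 (volume.restrict (Set.Icc 0 T)))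
    (e : ℝ → ℝ) (he : ∀ t, e t = Real.exp (∫ s in Set.Ioc 0 t, a s))
    (n : ℕ) (hn : 2 ≤ n) (s u : Fin n → ℝ)
    (hs : ∀ i, s i ∈ Set.Icc 0 T)
    (J : Finset (Fin n)) (hJ : J.Nonempty)
    (hu : ∀ i ∈ J, u i ∈ Set.Icc (s i) T) :
    ∑ S ∈ J.powerset, (-1 : ℝ) ^ S.card *
        e (Finset.univ.sup' (Finset.univ_nonempty_iff.mpr (Fin.pos_iff_nonempty.mp (by omega)))
            (fun i => if i ∈ S then u i else s i)) =
      if ∀ i ∈ J,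
          Finset.univ.sup' (Finset.univ_nonempty_iff.mpr (Fin.pos_iff_nonempty.mp (by omega))) s
            ≤ u i then
        e (Finset.univ.sup' (Finset.univ_nonempty_iff.mpr (Fin.pos_iff_nonempty.mp (by omega))) s)
          - e (J.inf' hJ u)
      else 0 := by
  have hne : (Finset.univ : Finset (Fin n)).Nonempty :=
    Finset.univ_nonempty_iff.mpr (Fin.pos_iff_nonempty.mp (by omega))
  obtain ⟨m, hm, hmin⟩ := J.exists_min_image u hJ
  have hinf : J.inf' hJ u = u m :=
    le_antisymm (Finset.inf'_le u hm) (Finset.le_inf' hJ u hmin)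
  rw [hinf]
  -- the maximum of `v^S`
  let V : Finset (Fin n) → ℝ := fun S =>
    Finset.univ.sup' hne (fun i => if i ∈ S then u i else s i)
  let M : ℝ := Finset.univ.sup' hne s
  have hV0 : V ∅ = M := by simp [V, M]
  have hle : ∀ S i, (if i ∈ S then u i else s i) ≤ V S := fun S i =>
    Finset.le_sup' (fun i => if i ∈ S then u i else s i) (Finset.mem_univ i)
  have hMV : ∀ S ⊆ J, M ≤ V S := by
    intro S hS
    refine Finset.sup'_le _ _ fun i _ => ?_
    have h := hle S i
    by_cases hi : i ∈ S
    · rw [if_pos hi] at h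
      exact (hu i (hS hi)).1.trans h
    · rwa [if_neg hi] at h
  have hins : ∀ S, V (insert m S) = max (V S) (u m) := by
    intro S
    apply le_antisymm
    · refine Finset.sup'_le _ _ fun i _ => ?_
      have h := hle S i
      by_cases him : i = m
      · subst him; simp
      · simp only [Finset.mem_insert, him, false_or]
        exact h.trans (le_max_left _ _)
    · have hmm : u m ≤ V (insert m S) := by
        have h := hle (insert m S) m
        simpa using h
      refine max_le (Finset.sup'_le _ _ fun i _ => ?_) hmm
      by_cases him : i = m
      · subst him
        refine le_trans ?_ hmm
        split_ifs
        · exact le_rfl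
        · exact (hu i hm).1
      · have h := hle (insert m S) i
        simpa only [Finset.mem_insert, him, false_or] using h
  change ∑ S ∈ J.powerset, (-1 : ℝ) ^ S.card * e (V S) =
    if ∀ i ∈ J, M ≤ u i then e M - e (u m) else 0
  have hnot : m ∉ J.erase m := Finset.notMem_erase m J
  rw [← Finset.insert_erase hm, Finset.sum_powerset_insert hnot, ← Finset.sum_add_distrib,
    Finset.insert_erase hm]
  have hterm : ∀ S ∈ (J.erase m).powerset,
      (-1 : ℝ) ^ S.card * e (V S) + (-1 : ℝ) ^ (insert m S).card * e (V (insert m S))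
        = (-1 : ℝ) ^ S.card * (e (V S) - e (max (V S) (u m))) := by
    intro S hS
    have hmS : m ∉ S := fun h => hnot (Finset.mem_powerset.mp hS h)
    rw [Finset.card_insert_of_notMem hmS, hins, pow_succ]
    ring
  rw [Finset.sum_congr rfl hterm]
  split_ifs with hall
  · rw [Finset.sum_eq_single_of_mem ∅ (Finset.empty_mem_powerset _)]
    · rw [hV0, max_eq_right (hall m hm)]
      simp
    · intro S hS hSne
      obtain ⟨k, hk⟩ := Finset.nonempty_iff_ne_empty.mpr hSne
      have hkJ : k ∈ J := Finset.mem_of_mem_erase (Finset.mem_powerset.mp hS hk)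
      have h := hle S k
      rw [if_pos hk] at h
      rw [max_eq_left ((hmin k hkJ).trans h), sub_self, mul_zero]
  · push Not at hall
    obtain ⟨k, hk, hlt⟩ := hall
    refine Finset.sum_eq_zero fun S hS => ?_
    have hSJ : S ⊆ J := (Finset.mem_powerset.mp hS).trans (Finset.erase_subset _ _)
    rw [max_eq_left (((hmin k hk).trans hlt.le).trans (hMV S hSJ)), sub_self, mul_zero]
end

section
/- Let (a_k)_{k≥0} be a sequence of nonnegative real numbers and let c ≥ 0. Then Σ_{n=0}^∞ (n+1)! · [ Σ_{k=0}^n a_k c^{n+1-k} / (n+1-k)! ]² ≤ exp(1 + c²) · Σ_{k=0}^∞ k! a_k² (1 + c²)^k, as an inequality in [0, +∞]. -/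
open MeasureTheory Real Set

theorem aux_real (a : ℕ → ℝ) (c : ℝ) (N : ℕ) :
    ((N.factorial : ℝ) *
        (∑ k ∈ Finset.range N, a k * c ^ (N - k) / ((N - k).factorial : ℝ)) ^ 2) ≤
    ∑ k ∈ Finset.range (N + 1), ((k.factorial : ℝ) * a k ^ 2 * (1 + c ^ 2) ^ k) *
      ((1 + c ^ 2) ^ (N - k) / ((N - k).factorial : ℝ)) := by
  have h1 : (∑ k ∈ Finset.range N, a k * c ^ (N - k) / ((N - k).factorial : ℝ)) ^ 2 ≤
      (∑ k ∈ Finset.range N, (k.factorial : ℝ) * a k ^ 2 / ((N - k).factorial : ℝ)) *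
      (∑ k ∈ Finset.range N, (c ^ 2) ^ (N - k) / ((k.factorial : ℝ) * (N - k).factorial)) := by
    apply Finset.sum_sq_le_sum_mul_sum_of_sq_eq_mul
    · intro k _
      positivity
    · intro k _
      positivity
    · intro k _
      have := Nat.factorial_ne_zero k
      have := Nat.factorial_ne_zero (N - k)
      field_simp
      ring
  have h2 : (N.factorial : ℝ) *
      (∑ k ∈ Finset.range N, (c ^ 2) ^ (N - k) / ((k.factorial : ℝ) * (N - k).factorial)) ≤
      (1 + c ^ 2) ^ N := by
    rw [add_pow, Finset.sum_range_succ, Finset.mul_sum]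
    refine le_add_of_le_of_nonneg (Finset.sum_le_sum fun k hk => ?_) (by positivity)
    rw [Nat.cast_choose ℝ (Finset.mem_range.1 hk).le, one_pow, one_mul]
    apply le_of_eq
    ring
  have h3 : (∑ k ∈ Finset.range N, (k.factorial : ℝ) * a k ^ 2 / ((N - k).factorial : ℝ)) ≤
      ∑ k ∈ Finset.range (N + 1), (k.factorial : ℝ) * a k ^ 2 / ((N - k).factorial : ℝ) := by
    rw [Finset.sum_range_succ]
    exact le_add_of_nonneg_right (by positivity)
  have h0 : 0 ≤ ∑ k ∈ Finset.range N, (k.factorial : ℝ) * a k ^ 2 / ((N - k).factorial : ℝ) :=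
    Finset.sum_nonneg fun k _ => by positivity
  calc _ ≤ (N.factorial : ℝ) * (_ * _) := mul_le_mul_of_nonneg_left h1 (by positivity)
    _ = (∑ k ∈ Finset.range N, (k.factorial : ℝ) * a k ^ 2 / ((N - k).factorial : ℝ)) *
        ((N.factorial : ℝ) * (∑ k ∈ Finset.range N,
          (c ^ 2) ^ (N - k) / ((k.factorial : ℝ) * (N - k).factorial))) := by ring
    _ ≤ (∑ k ∈ Finset.range N, (k.factorial : ℝ) * a k ^ 2 / ((N - k).factorial : ℝ)) *
        (1 + c ^ 2) ^ N := mul_le_mul_of_nonneg_left h2 h0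
    _ ≤ (∑ k ∈ Finset.range (N + 1), (k.factorial : ℝ) * a k ^ 2 / ((N - k).factorial : ℝ)) *
        (1 + c ^ 2) ^ N := mul_le_mul_of_nonneg_right h3 (by positivity)
    _ = _ := by
      rw [Finset.sum_mul]
      refine Finset.sum_congr rfl fun k hk => ?_
      have hk' : k + (N - k) = N := by
        have := Finset.mem_range.1 hk
        omega
      have : (1 + c ^ 2) ^ N = (1 + c ^ 2) ^ k * (1 + c ^ 2) ^ (N - k) := by
        rw [← pow_add, hk']
      rw [this]
      ring

theorem aux_cauchy (f g : ℕ → ENNReal) :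
    ∑' n : ℕ, ∑ k ∈ Finset.range (n + 1), f k * g (n - k) = (∑' n, g n) * ∑' n, f n := by
  have h : ∀ n : ℕ, ∑ k ∈ Finset.range (n + 1), f k * g (n - k) =
      ∑' x : Finset.HasAntidiagonal.antidiagonal n, f x.1.1 * g x.1.2 := by
    intro n
    rw [← Finset.Nat.sum_antidiagonal_eq_sum_range_succ (fun i j => f i * g j) n,
      ← Finset.tsum_subtype (Finset.HasAntidiagonal.antidiagonal n) (fun x => f x.1 * g x.2)]
  simp_rw [h]
  rw [← ENNReal.tsum_sigma (fun (n : ℕ) (x : Finset.HasAntidiagonal.antidiagonal n) => f x.1.1 * g x.1.2)]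
  have := (Finset.HasAntidiagonal.sigmaAntidiagonalEquivProd (A := ℕ)).tsum_eq (fun x => f x.1 * g x.2)
  refine Eq.trans this ?_
  rw [ENNReal.tsum_prod (f := fun i j => f i * g j)]
  simp_rw [ENNReal.tsum_mul_left, ENNReal.tsum_mul_right]
  rw [mul_comm]

/-- Lemma 4.7.1 (abstract form): for nonnegative `a_k` and `c ≥ 0`,
`Σ_n (n+1)! [Σ_{k=0}^n a_k c^{n+1-k}/(n+1-k)!]² ≤ exp(1+c²) Σ_k k! a_k² (1+c²)^k`
as an inequality in `[0,∞]`. -/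
theorem series_bound_exp (a : ℕ → ℝ) (ha : ∀ k, 0 ≤ a k) (c : ℝ) (hc : 0 ≤ c) :
    ∑' n : ℕ, ENNReal.ofReal (((n + 1).factorial : ℝ) *
        (∑ k ∈ Finset.range (n + 1), a k * c ^ (n + 1 - k) / ((n + 1 - k).factorial : ℝ)) ^ 2) ≤
      ENNReal.ofReal (Real.exp (1 + c ^ 2)) *
        ∑' k : ℕ, ENNReal.ofReal ((k.factorial : ℝ) * a k ^ 2 * (1 + c ^ 2) ^ k) := by
  have hexp : ENNReal.ofReal (Real.exp (1 + c ^ 2)) =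
      ∑' j : ℕ, ENNReal.ofReal ((1 + c ^ 2) ^ j / (j.factorial : ℝ)) := by
    rw [← ENNReal.ofReal_tsum_of_nonneg (fun j => by positivity)
      (Real.summable_pow_div_factorial _), Real.exp_eq_exp_ℝ,
      NormedSpace.exp_eq_tsum_div]
  rw [hexp, ← aux_cauchy]
  refine le_trans (ENNReal.tsum_le_tsum fun n => ?_)
    (ENNReal.tsum_comp_le_tsum_of_injective (add_left_injective 1) _)
  refine (ENNReal.ofReal_le_ofReal (aux_real a c (n + 1))).trans ?_
  rw [ENNReal.ofReal_sum_of_nonneg (fun k _ => by positivity)]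
  refine Finset.sum_le_sum fun k _ => ?_
  rw [ENNReal.ofReal_mul (by positivity)]
end

section
/- Let (a_k)_{k≥0} be a sequence of nonnegative real numbers, let C > 0 and d ≥ 0, and set B = 1 + C d². Then Σ_{n=0}^∞ (n+1)! · [ Σ_{k=0}^n C^{(n+1-k)/2} a_k d^{n-k} / (n-k)! ]² ≤ C · e^{B} · ( Σ_{k=0}^∞ (k+1)! a_k² B^k + Σ_{k=0}^∞ k! a_k² B^{k+1} ), as an inequality in [0, +∞]. -/
open MeasureTheory Real Set

lemma sbe_expsum (B : ℝ) (k : ℕ) :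
    HasSum (fun m : ℕ => ((k + m + 1 : ℕ) : ℝ) * B ^ (k + m) / (m.factorial : ℝ))
      (Real.exp B * ((k + 1) * B ^ k + B ^ (k + 1))) := by
  have h1 : HasSum (fun m : ℕ => B ^ m / (m.factorial : ℝ)) (Real.exp B) := by
    rw [Real.exp_eq_exp_ℝ]
    exact NormedSpace.expSeries_div_hasSum_exp B
  have h2 : HasSum (fun m : ℕ => (m : ℝ) * (B ^ m / (m.factorial : ℝ))) (B * Real.exp B) := by
    rw [← hasSum_nat_add_iff' 1]
    simp only [Finset.sum_range_one, Nat.cast_zero, zero_mul, sub_zero]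
    refine Eq.mp (congrArg (fun f => HasSum f _) (funext fun m => ?_)) (h1.mul_left B)
    symm
    have := Nat.factorial_ne_zero m
    rw [Nat.factorial_succ]
    push_cast
    field_simp
    ring
  have h3 := (h1.mul_left ((k + 1) * B ^ k)).add (h2.mul_left (B ^ k))
  have e : Real.exp B * ((k + 1) * B ^ k + B ^ (k + 1)) =
      (k + 1) * B ^ k * Real.exp B + B ^ k * (B * Real.exp B) := by ring
  rw [e]
  refine Eq.mp (congrArg (fun f => HasSum f _) (funext fun m => ?_)) h3
  symm
  push_cast
  ring

lemma sbe_cs (a : ℕ → ℝ) (C d : ℝ) (hC : 0 < C) (n : ℕ) :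
    ((n + 1).factorial : ℝ) *
        (∑ k ∈ Finset.range (n + 1),
          C ^ (((n + 1 - k : ℕ) : ℝ) / 2) * a k * d ^ (n - k) / ((n - k).factorial : ℝ)) ^ 2 ≤
      ∑ k ∈ Finset.range (n + 1), C * (k.factorial : ℝ) * a k ^ 2 *
        (((k + (n - k) + 1 : ℕ) : ℝ) * (1 + C * d ^ 2) ^ (k + (n - k)) /
          ((n - k).factorial : ℝ)) := by
  have hcs := Finset.sum_sq_le_sum_mul_sum_of_sq_le_mul (Finset.range (n + 1))
    (r := fun k => C ^ (((n + 1 - k : ℕ) : ℝ) / 2) * a k * d ^ (n - k) / ((n - k).factorial : ℝ))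
    (f := fun k => 1 ^ k * (C * d ^ 2) ^ (n - k) * (n.choose k : ℝ))
    (g := fun k => C * a k ^ 2 * (k.factorial : ℝ) / ((n.factorial : ℝ) * ((n - k).factorial : ℝ)))
    (fun k _ => by positivity) (fun k _ => by positivity) ?_
  · rw [← add_pow] at hcs
    refine (mul_le_mul_of_nonneg_left hcs (by positivity)).trans (le_of_eq ?_)
    rw [Finset.mul_sum, Finset.mul_sum]
    refine Finset.sum_congr rfl fun k hk => ?_
    have hk' : k + (n - k) = n := by have := Finset.mem_range.1 hk; omega
    rw [hk', Nat.factorial_succ]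
    have := Nat.factorial_ne_zero n
    have := Nat.factorial_ne_zero (n - k)
    push_cast
    field_simp
  · intro k hk
    refine le_of_eq ?_
    have hk' : k ≤ n := by have := Finset.mem_range.1 hk; omega
    have e : n + 1 - k = (n - k) + 1 := by omega
    have hp : (C ^ (((n + 1 - k : ℕ) : ℝ) / 2)) ^ 2 = C ^ (n - k) * C := by
      rw [← Real.rpow_natCast, ← Real.rpow_mul hC.le, e, ← pow_succ, ← Real.rpow_natCast]
      congr 1
      push_cast
      ring
    rw [div_pow, mul_pow, mul_pow, hp, Nat.cast_choose ℝ hk']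
    have := Nat.factorial_ne_zero n
    have := Nat.factorial_ne_zero k
    have := Nat.factorial_ne_zero (n - k)
    rw [mul_pow C, one_pow, ← pow_mul, ← pow_mul, mul_comm 2]
    field_simp


/-- Lemma 4.8.1 (abstract form): for nonnegative `a_k`, `C > 0`, `d ≥ 0` and `B = 1 + Cd²`,
`Σ_n (n+1)! [Σ_{k=0}^n C^{(n+1-k)/2} a_k d^{n-k}/(n-k)!]²
  ≤ C e^B (Σ_k (k+1)! a_k² B^k + Σ_k k! a_k² B^{k+1})` in `[0,∞]`. -/
theorem series_bound_exp' (a : ℕ → ℝ) (ha : ∀ k, 0 ≤ a k) (C d : ℝ) (hC : 0 < C)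
    (hd : 0 ≤ d) :
    ∑' n : ℕ, ENNReal.ofReal (((n + 1).factorial : ℝ) *
        (∑ k ∈ Finset.range (n + 1),
          C ^ (((n + 1 - k : ℕ) : ℝ) / 2) * a k * d ^ (n - k) / ((n - k).factorial : ℝ)) ^ 2) ≤
      ENNReal.ofReal (C * Real.exp (1 + C * d ^ 2)) *
        (∑' k : ℕ, ENNReal.ofReal (((k + 1).factorial : ℝ) * a k ^ 2 * (1 + C * d ^ 2) ^ k) +
         ∑' k : ℕ, ENNReal.ofReal ((k.factorial : ℝ) * a k ^ 2 * (1 + C * d ^ 2) ^ (k + 1))) := by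
  set B := 1 + C * d ^ 2 with hB
  have hB0 : 0 ≤ B := by positivity
  let F : ℕ → ℕ → ℝ := fun k m => C * (k.factorial : ℝ) * a k ^ 2 *
        (((k + m + 1 : ℕ) : ℝ) * B ^ (k + m) / (m.factorial : ℝ))
  have hF : ∀ k m, 0 ≤ F k m := fun k m => by positivity
  calc _ ≤ ∑' n : ℕ, ∑ p ∈ Finset.HasAntidiagonal.antidiagonal n, ENNReal.ofReal (F p.1 p.2) := by
        refine ENNReal.tsum_le_tsum fun n => ?_
        rw [Finset.Nat.sum_antidiagonal_eq_sum_range_succ_mk,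
          ← ENNReal.ofReal_sum_of_nonneg (fun k _ => hF _ _)]
        exact ENNReal.ofReal_le_ofReal (sbe_cs a C d hC n)
    _ = ∑' p : ℕ × ℕ, ENNReal.ofReal (F p.1 p.2) := by
        rw [← Finset.HasAntidiagonal.sigmaAntidiagonalEquivProd.tsum_eq, ENNReal.tsum_sigma']
        refine tsum_congr fun n => ?_
        rw [← Finset.tsum_subtype]
        rfl
    _ = ∑' k : ℕ, ∑' m : ℕ, ENNReal.ofReal (F k m) := 
        ENNReal.tsum_prod (f := fun k m => ENNReal.ofReal (F k m))
    _ = _ := by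
        rw [← ENNReal.tsum_add, ← ENNReal.tsum_mul_left]
        refine tsum_congr fun k => ?_
        have h := (sbe_expsum B k).mul_left (C * (k.factorial : ℝ) * a k ^ 2)
        rw [← ENNReal.ofReal_tsum_of_nonneg (hF k) h.summable, h.tsum_eq,
          ← ENNReal.ofReal_add (by positivity) (by positivity),
          ← ENNReal.ofReal_mul (by positivity), Nat.factorial_succ]
        congr 1
        push_cast
        ring
end

section
/- Let (a_j)_{j≥0} be a sequence of nonnegative real numbers and let c ≥ 0. Then Σ_{n=0}^∞ n! · [ Σ_{j=0}^n c^{n-j} a_j / (n-j)! ]² ≤ exp(c² + 1) · Σ_{j=0}^∞ j! a_j² (c² + 1)^j, as an inequality in [0, +∞]. -/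
open MeasureTheory Real Set

lemma termwise_aux (a : ℕ → ℝ) (c : ℝ) (n : ℕ) :
    (n.factorial : ℝ) *
        (∑ j ∈ Finset.range (n + 1), c ^ (n - j) * a j / ((n - j).factorial : ℝ)) ^ 2 ≤
      ∑ p ∈ Finset.HasAntidiagonal.antidiagonal n, ((p.1.factorial : ℝ) * a p.1 ^ 2 * (c ^ 2 + 1) ^ p.1) *
        ((c ^ 2 + 1) ^ p.2 / (p.2.factorial : ℝ)) := by
  have h1 := Finset.sum_sq_le_sum_mul_sum_of_sq_le_mul (Finset.range (n + 1))
    (r := fun j => c ^ (n - j) * a j / ((n - j).factorial : ℝ))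
    (f := fun j => (c ^ 2) ^ (n - j) * (n.choose j : ℝ))
    (g := fun j => a j ^ 2 / (((n - j).factorial : ℝ) ^ 2 * (n.choose j : ℝ)))
    (fun j _ => by positivity) (fun j _ => by positivity)
    (fun j hj => by
      have hC : (n.choose j : ℝ) ≠ 0 := by
        have := Nat.choose_pos (Nat.lt_succ_iff.mp (Finset.mem_range.mp hj))
        positivity
      refine le_of_eq ?_
      rw [← pow_mul, mul_comm 2 (n - j), pow_mul]
      field_simp)
  have h2 : ∑ j ∈ Finset.range (n + 1), (c ^ 2) ^ (n - j) * (n.choose j : ℝ)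
      = (c ^ 2 + 1) ^ n := by
    rw [add_comm (c ^ 2) 1, add_pow]
    simp
  rw [h2] at h1
  refine (mul_le_mul_of_nonneg_left h1 (Nat.cast_nonneg _)).trans (le_of_eq ?_)
  rw [Finset.Nat.sum_antidiagonal_eq_sum_range_succ_mk, ← mul_assoc, Finset.mul_sum]
  refine Finset.sum_congr rfl fun j hj => ?_
  have hjn := Nat.lt_succ_iff.mp (Finset.mem_range.mp hj)
  have hC : (n.choose j : ℝ) ≠ 0 := by
    have := Nat.choose_pos hjn
    positivity
  have hf : (n.factorial : ℝ) = n.choose j * j.factorial * (n - j).factorial := by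
    exact_mod_cast (Nat.choose_mul_factorial_mul_factorial hjn).symm
  have hp : (c ^ 2 + 1) ^ n = (c ^ 2 + 1) ^ j * (c ^ 2 + 1) ^ (n - j) := by
    rw [← pow_add, Nat.add_sub_cancel' hjn]
  simp only
  rw [hf, hp]
  field_simp

lemma tsum_antidiagonal_aux (f : ℕ × ℕ → ENNReal) :
    ∑' n : ℕ, ∑ p ∈ Finset.HasAntidiagonal.antidiagonal n, f p = ∑' j : ℕ, ∑' m : ℕ, f (j, m) := by
  rw [← ENNReal.tsum_prod (f := fun j m => f (j, m)),
    ← Equiv.tsum_eq Finset.HasAntidiagonal.sigmaAntidiagonalEquivProd (fun p : ℕ × ℕ => f (p.1, p.2)),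
    ENNReal.tsum_sigma']
  refine tsum_congr fun n => ?_
  rw [← Finset.tsum_subtype]
  rfl

/-- The estimate showing `Σ_n n!‖f_n^t‖² < ∞` (abstract form): for nonnegative `a_j` and
`c ≥ 0`, `Σ_n n! [Σ_{j=0}^n c^{n-j} a_j/(n-j)!]² ≤ exp(c²+1) Σ_j j! a_j² (c²+1)^j`
in `[0,∞]`. -/
theorem series_bound_exp'' (a : ℕ → ℝ) (ha : ∀ j, 0 ≤ a j) (c : ℝ) (hc : 0 ≤ c) :
    ∑' n : ℕ, ENNReal.ofReal ((n.factorial : ℝ) *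
        (∑ j ∈ Finset.range (n + 1), c ^ (n - j) * a j / ((n - j).factorial : ℝ)) ^ 2) ≤
      ENNReal.ofReal (Real.exp (c ^ 2 + 1)) *
        ∑' j : ℕ, ENNReal.ofReal ((j.factorial : ℝ) * a j ^ 2 * (c ^ 2 + 1) ^ j) := by
  have hexp : ∑' m : ℕ, ENNReal.ofReal ((c ^ 2 + 1) ^ m / (m.factorial : ℝ))
      = ENNReal.ofReal (Real.exp (c ^ 2 + 1)) := by
    rw [← ENNReal.ofReal_tsum_of_nonneg (fun m => by positivity)
      (Real.summable_pow_div_factorial _), Real.exp_eq_exp_ℝ,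
      NormedSpace.exp_eq_tsum_div]
  calc _ ≤ ∑' n : ℕ, ∑ p ∈ Finset.HasAntidiagonal.antidiagonal n,
        ENNReal.ofReal ((p.1.factorial : ℝ) * a p.1 ^ 2 * (c ^ 2 + 1) ^ p.1) *
        ENNReal.ofReal ((c ^ 2 + 1) ^ p.2 / (p.2.factorial : ℝ)) := by
        refine ENNReal.tsum_le_tsum fun n => ?_
        refine (ENNReal.ofReal_le_ofReal (termwise_aux a c n)).trans (le_of_eq ?_)
        rw [ENNReal.ofReal_sum_of_nonneg (fun p _ => by positivity)]
        exact Finset.sum_congr rfl fun p _ => ENNReal.ofReal_mul (by positivity)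
    _ = _ := by
        rw [tsum_antidiagonal_aux (fun p =>
          ENNReal.ofReal ((p.1.factorial : ℝ) * a p.1 ^ 2 * (c ^ 2 + 1) ^ p.1) *
          ENNReal.ofReal ((c ^ 2 + 1) ^ p.2 / (p.2.factorial : ℝ)))]
        simp only [ENNReal.tsum_mul_left, ENNReal.tsum_mul_right, hexp]
        rw [mul_comm]
end

section
/- Let (a_k)_{k≥0} be a sequence of nonnegative real numbers, let c ≥ 0 and θ ∈ ℝ. Then Σ_{n=1}^∞ e^{nθ} √(n!) · Σ_{j=1}^n a_{n-j} c^j / j! ≤ ( Σ_{n=1}^∞ (e^{θ + 1/2} c)^n / √(n!) ) · ( Σ_{k=0}^∞ e^{kθ} k^{k/2} a_k ), as an inequality in [0, +∞], with the convention 0^0 = 1 in the k = 0 term. -/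
open MeasureTheory Real Set

lemma fact_bound_aux (k j : ℕ) :
    ((k + j).factorial : ℝ) ≤ Real.exp j * (k : ℝ) ^ k * (j.factorial : ℝ) := by
  have h1 : ((k + j).factorial : ℝ) ≤ (j.factorial : ℝ) * ((j : ℝ) + k) ^ k := by
    have h := Nat.ascFactorial_le_pow_add j k
    have h2 := Nat.factorial_mul_ascFactorial j k
    rw [add_comm k j, ← h2]
    exact_mod_cast Nat.mul_le_mul_left _ h
  have h3 : ((j : ℝ) + k) ^ k ≤ Real.exp j * (k : ℝ) ^ k := by
    rcases Nat.eq_zero_or_pos k with rfl | hk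
    · simp
    · have hk' : (0 : ℝ) < k := by exact_mod_cast hk
      have h4 : ((j : ℝ) + k) ≤ Real.exp (j / k) * k := by
        have := Real.add_one_le_exp ((j : ℝ) / k)
        calc ((j : ℝ) + k) = (j / k + 1) * k := by field_simp
          _ ≤ _ := by gcongr
      calc ((j : ℝ) + k) ^ k ≤ (Real.exp (j / k) * k) ^ k := by gcongr
        _ = _ := by
          rw [mul_pow, ← Real.exp_nat_mul]
          congr 2
          field_simp
  calc _ ≤ _ := h1
    _ ≤ (j.factorial : ℝ) * (Real.exp j * (k : ℝ) ^ k) := by gcongr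
    _ = _ := by ring

lemma sqrt_bound_aux (k j : ℕ) :
    Real.sqrt ((k + j).factorial : ℝ) / (j.factorial : ℝ) ≤
      Real.exp (1 / 2) ^ j * (k : ℝ) ^ ((k : ℝ) / 2) / Real.sqrt (j.factorial : ℝ) := by
  have hj : (0 : ℝ) < j.factorial := by exact_mod_cast j.factorial_pos
  have hs : 0 < Real.sqrt (j.factorial : ℝ) := Real.sqrt_pos.2 hj
  have hss := Real.mul_self_sqrt hj.le
  have hk : ((k : ℝ) ^ ((k : ℝ) / 2)) ^ 2 = (k : ℝ) ^ k := by
    rw [← Real.rpow_natCast, ← Real.rpow_mul (by positivity), ← Real.rpow_natCast]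
    congr 1
    push_cast
    ring
  have he : (Real.exp (1 / 2) ^ j) ^ 2 = Real.exp j := by
    rw [← Real.exp_nat_mul, ← Real.exp_nat_mul]
    congr 1
    push_cast
    ring
  have h : Real.sqrt ((k + j).factorial : ℝ) ≤
      Real.exp (1 / 2) ^ j * (k : ℝ) ^ ((k : ℝ) / 2) * Real.sqrt (j.factorial : ℝ) := by
    apply Real.sqrt_le_iff.2
    refine ⟨by positivity, ?_⟩
    rw [mul_pow, mul_pow, hk, he, Real.sq_sqrt hj.le]
    exact fact_bound_aux k j
  rw [div_le_div_iff₀ hj hs]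
  calc _ ≤ (Real.exp (1 / 2) ^ j * (k : ℝ) ^ ((k : ℝ) / 2) * Real.sqrt (j.factorial : ℝ))
        * Real.sqrt (j.factorial : ℝ) := by gcongr
    _ = _ := by rw [mul_assoc, hss]

lemma cauchy_aux (A B : ℕ → ENNReal) :
    (∑' n, A n) * ∑' k, B k = ∑' n, ∑ i ∈ Finset.range (n + 1), A i * B (n - i) := by
  have h1 : (∑' n, A n) * ∑' k, B k = ∑' p : ℕ × ℕ, A p.1 * B p.2 := by
    have h0 : ∑' p : ℕ × ℕ, A p.1 * B p.2 = ∑' x, ∑' y, A x * B y :=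
      ENNReal.tsum_prod (f := fun x y => A x * B y)
    rw [h0, ← ENNReal.tsum_mul_right]
    simp_rw [ENNReal.tsum_mul_left]
  have h2 := Equiv.tsum_eq (Finset.HasAntidiagonal.sigmaAntidiagonalEquivProd : _ ≃ ℕ × ℕ)
    (fun p : ℕ × ℕ => A p.1 * B p.2)
  rw [h1, ← h2, ENNReal.tsum_sigma']
  congr 1
  ext n
  rw [← Nat.succ_eq_add_one,
    ← Finset.Nat.sum_antidiagonal_eq_sum_range_succ (fun x y => A x * B y) n]
  exact Finset.tsum_subtype (Finset.HasAntidiagonal.antidiagonal n) (fun p : ℕ × ℕ => A p.1 * B p.2)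

/-- Estimate (3.9.1) (abstract form): for nonnegative `a_k`, `c ≥ 0` and `θ ∈ ℝ`,
`Σ_{n≥1} e^{nθ} √(n!) Σ_{j=1}^n a_{n-j} c^j/j!
  ≤ (Σ_{n≥1} (e^{θ+1/2}c)^n/√(n!)) · (Σ_k e^{kθ} k^{k/2} a_k)` in `[0,∞]`,
with the convention `0^0 = 1` in the `k = 0` term. -/
theorem series_bound_continuity (a : ℕ → ℝ) (ha : ∀ k, 0 ≤ a k) (c : ℝ) (hc : 0 ≤ c)
    (θ : ℝ) :
    ∑' n : ℕ, ENNReal.ofReal (Real.exp (n * θ) * Real.sqrt (n.factorial : ℝ) *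
        ∑ j ∈ Finset.Icc 1 n, a (n - j) * c ^ j / (j.factorial : ℝ)) ≤
      (∑' n : ℕ, ENNReal.ofReal ((Real.exp (θ + 1 / 2) * c) ^ (n + 1) /
          Real.sqrt ((n + 1).factorial : ℝ))) *
        ∑' k : ℕ, ENNReal.ofReal (Real.exp (k * θ) * (k : ℝ) ^ ((k : ℝ) / 2) * a k) := by
  rw [cauchy_aux, tsum_eq_zero_add' ENNReal.summable]
  simp only [Finset.Icc_eq_empty_of_lt Nat.zero_lt_one, Finset.sum_empty, mul_zero,
    ENNReal.ofReal_zero, zero_add]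
  refine ENNReal.tsum_le_tsum fun n => ?_
  rw [← Finset.sum_congr rfl (fun i _ => ENNReal.ofReal_mul (by positivity)),
    ← ENNReal.ofReal_sum_of_nonneg (fun i _ => by have := ha (n - i); positivity)]
  apply ENNReal.ofReal_le_ofReal
  have hI : Finset.Icc 1 (n + 1) = (Finset.range (n + 1)).image (· + 1) := by
    ext x
    simp only [Finset.mem_Icc, Finset.mem_image, Finset.mem_range]
    constructor
    · rintro ⟨h1, h2⟩
      exact ⟨x - 1, by omega, by omega⟩
    · rintro ⟨y, h1, rfl⟩
      omega
  rw [hI, Finset.sum_image (fun x _ y _ h => by simpa using h), Finset.mul_sum]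
  refine Finset.sum_le_sum fun i hi => ?_
  obtain ⟨k, rfl⟩ : ∃ k, n = i + k := ⟨n - i, by have := Finset.mem_range.1 hi; omega⟩
  have e1 : i + k + 1 - (i + 1) = k := by omega
  have e2 : i + k - i = k := by omega
  have e3 : i + k + 1 = k + (i + 1) := by omega
  rw [e1, e2, e3]
  have hb := sqrt_bound_aux k (i + 1)
  have hak := ha k
  have hexp : Real.exp (((k + (i + 1) : ℕ) : ℝ) * θ) =
      Real.exp (k * θ) * Real.exp θ ^ (i + 1) := by
    rw [← Real.exp_nat_mul, ← Real.exp_add]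
    congr 1
    push_cast
    ring
  rw [hexp, Real.exp_add]
  calc _ = (Real.exp (k * θ) * Real.exp θ ^ (i + 1) * a k * c ^ (i + 1)) *
        (Real.sqrt ((k + (i + 1)).factorial : ℝ) / ((i + 1).factorial : ℝ)) := by ring
    _ ≤ (Real.exp (k * θ) * Real.exp θ ^ (i + 1) * a k * c ^ (i + 1)) *
        (Real.exp (1 / 2) ^ (i + 1) * (k : ℝ) ^ ((k : ℝ) / 2) /
          Real.sqrt ((i + 1).factorial : ℝ)) :=
        mul_le_mul_of_nonneg_left hb (by positivity)
    _ = _ := by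
        rw [mul_pow, mul_pow]
        ring
end

section
/- Let α ∈ (0,1/2), p ∈ (2, 1/α), and let b ∈ Λ^α_T with representative φ_b ∈ L^p([0,T]). For t ∈ [0,T] let φ_t ∈ L²([0,T]) denote the representative of b·1_{[0,t]} ∈ Λ^α_T. Then for every δ with 0 < δ < min( (p-2)/(2p), α, (1-αp)/p ) there exists a constant C_δ, depending only on α, p, δ and T, such that ‖φ_t − φ_s‖_{L²([0,T])} ≤ C_δ ‖φ_b‖_{L^p([0,T])} (t-s)^{δ} for all 0 ≤ s ≤ t ≤ T. -/
open MeasureTheory Real Set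

lemma rhb_L0 {β : ℝ} (h1 : -1 < β) (h2 : β < 0) : ∃ C : ℝ, 0 < C ∧ ∀ x : ℝ, 0 < x →
    ∫⁻ y in Ioi (0:ℝ), ENNReal.ofReal (y ^ β / (x + y)) ≤ ENNReal.ofReal (C * x ^ β) := by
  refine ⟨1 / (β + 1) + 1 / (-β), by
    have : 0 < β + 1 := by linarith
    have : 0 < -β := by linarith
    positivity, fun x hx => ?_⟩
  have hs : Ioi (0:ℝ) = Ioc 0 x ∪ Ioi x := (Ioc_union_Ioi_eq_Ioi hx.le).symm
  rw [hs, add_mul, ENNReal.ofReal_add]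
  rotate_left
  · have : 0 < β + 1 := by linarith
    positivity
  · have : 0 < -β := by linarith
    positivity
  refine (lintegral_union_le _ _ _).trans (add_le_add ?_ ?_)
  · have hint : IntegrableOn (fun y : ℝ => y ^ β * x⁻¹) (Ioc 0 x) :=
      ((intervalIntegrable_iff_integrableOn_Ioc_of_le hx.le).1
        (intervalIntegral.intervalIntegrable_rpow' h1)).mul_const _
    calc _ ≤ ∫⁻ y in Ioc 0 x, ENNReal.ofReal (y ^ β * x⁻¹) := by
          refine setLIntegral_mono' measurableSet_Ioc fun y hy => ENNReal.ofReal_le_ofReal ?_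
          rw [← div_eq_mul_inv]
          have := hy.1
          gcongr
          linarith
      _ = ENNReal.ofReal (∫ y in Ioc 0 x, y ^ β * x⁻¹) := by
          rw [ofReal_integral_eq_lintegral_ofReal hint]
          filter_upwards [ae_restrict_mem measurableSet_Ioc] with y hy
          have := hy.1
          positivity
      _ ≤ _ := by
          apply ENNReal.ofReal_le_ofReal
          rw [integral_mul_const, ← intervalIntegral.integral_of_le hx.le,
            integral_rpow (Or.inl h1), zero_rpow (by linarith), rpow_add hx, rpow_one]
          apply le_of_eq
          have : β + 1 ≠ 0 := by linarith
          field_simp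
          ring
  · have hint : IntegrableOn (fun y : ℝ => y ^ (β - 1)) (Ioi x) :=
      integrableOn_Ioi_rpow_of_lt (by linarith) hx
    calc _ ≤ ∫⁻ y in Ioi x, ENNReal.ofReal (y ^ (β - 1)) := by
          refine setLIntegral_mono' measurableSet_Ioi fun y hy => ENNReal.ofReal_le_ofReal ?_
          have hy0 : 0 < y := hx.trans hy
          rw [rpow_sub hy0, rpow_one]
          gcongr
          linarith
      _ = ENNReal.ofReal (∫ y in Ioi x, y ^ (β - 1)) := by
          rw [ofReal_integral_eq_lintegral_ofReal hint]
          filter_upwards [ae_restrict_mem measurableSet_Ioi] with y hy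
          have hy0 : 0 < y := hx.trans hy
          positivity
      _ ≤ _ := by
          apply ENNReal.ofReal_le_ofReal
          rw [integral_Ioi_rpow_of_lt (by linarith) hx]
          apply le_of_eq
          have : β ≠ 0 := by linarith
          simp
          field_simp

noncomputable def rhbC (α : ℝ) : ENNReal :=
  ∫⁻ w in Ioi (0:ℝ), ENNReal.ofReal (w ^ (-α) / (1 + w))

lemma rhbC_ne_top {α : ℝ} (h0 : 0 < α) (h1 : α < 1) : rhbC α ≠ ⊤ := by
  obtain ⟨C, hC, h⟩ := rhb_L0 (β := -α) (by linarith) (by linarith)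
  exact ne_top_of_le_ne_top ENNReal.ofReal_ne_top (h 1 one_pos)

lemma rhbC_ne_zero (α : ℝ) : rhbC α ≠ 0 := by
  unfold rhbC
  rw [← pos_iff_ne_zero, setLIntegral_pos_iff (by fun_prop)]
  have : Function.support (fun w : ℝ => ENNReal.ofReal (w ^ (-α) / (1 + w))) ∩ Ioi 0 = Ioi 0 := by
    apply inter_eq_right.2
    intro w hw
    have hw0 : (0:ℝ) < w := hw
    simp only [Function.mem_support, ne_eq, ENNReal.ofReal_eq_zero, not_le]
    positivity
  rw [this]; simp

lemma rhb_KA {α x v : ℝ} (hxv : x < v) :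
    ∫⁻ u in Ioo x v, ENNReal.ofReal ((u - x) ^ (-α) * (v - u) ^ (α - 1)) = rhbC α := by
  have him : (fun u => (u - x) / (v - u)) '' Ioo x v = Ioi 0 := by
    ext w
    simp only [mem_image, mem_Ioo, mem_Ioi]
    constructor
    · rintro ⟨u, ⟨h1, h2⟩, rfl⟩
      exact div_pos (by linarith) (by linarith)
    · intro hw
      refine ⟨(x + w * v) / (1 + w), ⟨?_, ?_⟩, ?_⟩
      · rw [lt_div_iff₀ (by linarith)]; nlinarith
      · rw [div_lt_iff₀ (by linarith)]; nlinarith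
      · have : v - x ≠ 0 := by linarith
        have h3 : 1 + w ≠ 0 := by linarith
        have e1 : (x + w * v) / (1 + w) - x = w * (v - x) / (1 + w) := by field_simp; ring
        have e2 : v - (x + w * v) / (1 + w) = (v - x) / (1 + w) := by field_simp; ring
        rw [e1, e2]
        field_simp
  unfold rhbC
  rw [← him, lintegral_image_eq_lintegral_abs_deriv_mul (f' := fun u => (v - x) / (v - u) ^ 2)
    measurableSet_Ioo]
  · refine setLIntegral_congr_fun measurableSet_Ioo fun u hu => ?_
    obtain ⟨h1, h2⟩ := hu
    have a1 : 0 < u - x := by linarith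
    have a2 : 0 < v - u := by linarith
    have a3 : 0 < v - x := by linarith
    rw [← ENNReal.ofReal_mul (abs_nonneg _), abs_of_pos (by positivity)]
    congr 1
    rw [div_rpow a1.le a2.le, rpow_sub a2, rpow_one, rpow_neg a2.le]
    have : 1 + (u - x) / (v - u) = (v - x) / (v - u) := by field_simp; ring
    rw [this]
    have := (rpow_pos_of_pos a2 α).ne'
    field_simp
  · intro u hu
    obtain ⟨h1, h2⟩ := hu
    have a2 : v - u ≠ 0 := by linarith
    have := (((hasDerivAt_id u).sub_const x).div ((hasDerivAt_id u).const_sub v) a2).hasDerivWithinAt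
      (s := Ioo x v)
    convert! this using 1
    simp
  · intro u hu w hw h
    obtain ⟨h1, h2⟩ := hu
    obtain ⟨h3, h4⟩ := hw
    simp only at h
    rw [div_eq_div_iff (by linarith) (by linarith)] at h
    have : (v - x) * (u - w) = 0 := by linarith
    rcases mul_eq_zero.1 this with h | h <;> linarith

lemma rhb_KB {α x t v : ℝ} (htv : t < v) :
    ∫⁻ u in Ioo x t, ENNReal.ofReal ((u - x) ^ (-α) * (v - u) ^ (α - 1)) =
    ∫⁻ r in Ioo x t, ENNReal.ofReal ((t - r) ^ (-α) * (v - t) ^ α / (v - r)) := by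
  have hmaps : ∀ u ∈ Ioo x t, t - (v - t) * (u - x) / (v - u) ∈ Ioo x t := by
    rintro u ⟨h1, h2⟩
    have a1 : 0 < u - x := by linarith
    have a2 : 0 < v - u := by linarith
    have a4 : 0 < v - t := by linarith
    constructor
    · rw [lt_sub_comm, div_lt_iff₀ a2]; nlinarith
    · have : 0 < (v - t) * (u - x) / (v - u) := by positivity
      linarith
  have hinv : ∀ u ∈ Ioo x t, t - (v - t) * ((t - (v - t) * (u - x) / (v - u)) - x) /
      (v - (t - (v - t) * (u - x) / (v - u))) = u := by
    rintro u ⟨h1, h2⟩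
    have a1 : 0 < u - x := by linarith
    have a2 : 0 < v - u := by linarith
    have a3 : 0 < v - x := by linarith
    have a4 : 0 < v - t := by linarith
    have e : v - (t - (v - t) * (u - x) / (v - u)) = (v - t) * (v - x) / (v - u) := by
      field_simp; ring
    rw [e]
    field_simp
    ring
  have him : (fun u => t - (v - t) * (u - x) / (v - u)) '' Ioo x t = Ioo x t := by
    apply Subset.antisymm
    · rintro _ ⟨u, hu, rfl⟩; exact hmaps u hu
    · intro u hu; exact ⟨_, hmaps u hu, hinv u hu⟩
  conv_rhs => rw [← him]
  rw [lintegral_image_eq_lintegral_abs_deriv_mul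
    (f' := fun u => - ((v - t) * (v - x) / (v - u) ^ 2)) measurableSet_Ioo]
  · refine setLIntegral_congr_fun measurableSet_Ioo fun u hu => ?_
    obtain ⟨h1, h2⟩ := hu
    have a1 : 0 < u - x := by linarith
    have a2 : 0 < v - u := by linarith
    have a3 : 0 < v - x := by linarith
    have a4 : 0 < v - t := by linarith
    rw [← ENNReal.ofReal_mul (abs_nonneg _), abs_neg, abs_of_pos (by positivity)]
    congr 1
    have e : v - (t - (v - t) * (u - x) / (v - u)) = (v - t) * (v - x) / (v - u) := by
      field_simp; ring
    have e2 : t - (t - (v - t) * (u - x) / (v - u)) = (v - t) * (u - x) / (v - u) := by ring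
    rw [e, e2, div_rpow (by positivity) a2.le, mul_rpow a4.le a1.le, rpow_sub a2, rpow_one,
      rpow_neg a2.le, rpow_neg a4.le]
    have := (rpow_pos_of_pos a2 α).ne'
    have := (rpow_pos_of_pos a4 α).ne'
    field_simp
  · intro u hu
    obtain ⟨h1, h2⟩ := hu
    have a2 : v - u ≠ 0 := by linarith
    have := ((((((hasDerivAt_id u).sub_const x).const_mul (v - t)).div
      ((hasDerivAt_id u).const_sub v) a2)).const_sub t).hasDerivWithinAt (s := Ioo x t)
    convert! this using 1
    simp
    ring
  · intro u hu w hw h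
    rw [← hinv u hu, ← hinv w hw]
    simp only at h
    rw [h]

lemma rhb_D {a b : ℝ} {F : ℝ → ℝ} (hF : IntegrableOn F (Ioo a b))
    (h : ∀ x ∈ Ioo a b, ∫ v in Ioo x b, F v = 0) :
    ∀ᵐ x ∂(volume.restrict (Ioo a b)), F x = 0 := by
  rcases le_or_gt b a with hab | hab
  · simp [Ioo_eq_empty (not_lt.2 hab)]
  rw [ae_restrict_iff' measurableSet_Ioo]
  have hI : IntervalIntegrable F volume a b := by
    rw [intervalIntegrable_iff_integrableOn_Ioo_of_le hab.le]; exact hF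
  filter_upwards [hI.ae_hasDerivAt_integral] with x hx hxab
  rw [uIcc_of_le hab.le] at hx
  have h1 := hx (Ioo_subset_Icc_self hxab) b (right_mem_Icc.2 hab.le)
  have h2 : (fun x => ∫ t in b..x, F t) =ᶠ[nhds x] fun _ => 0 := by
    filter_upwards [Ioo_mem_nhds hxab.1 hxab.2] with y hy
    rw [intervalIntegral.integral_symm, intervalIntegral.integral_of_le hy.2.le,
      integral_Ioc_eq_integral_Ioo, h y hy, neg_zero]
  exact (h1.congr_of_eventuallyEq h2.symm).unique (hasDerivAt_const x 0)

lemma rhb_F {μ ν : Measure ℝ} [SFinite μ] [SFinite ν] {k : ℝ → ℝ → ℝ} {h : ℝ → ℝ} {M : ENNReal}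
    (hM : M ≠ ⊤) (hk : Measurable (Function.uncurry k)) 
    (hb : ∀ᵐ v ∂ν, ∫⁻ u, ‖k u v‖ₑ ∂μ ≤ M) (hh : Integrable h ν) :
    Integrable (Function.uncurry fun u v => h v * k u v) (μ.prod ν) := by
  have hm : AEStronglyMeasurable (Function.uncurry fun u v => h v * k u v) (μ.prod ν) :=
    (hh.aestronglyMeasurable.comp_snd).mul hk.aestronglyMeasurable
  refine ⟨hm, ?_⟩
  rw [HasFiniteIntegral, lintegral_prod_symm _ hm.enorm]
  calc _ = ∫⁻ v, ‖h v‖ₑ * ∫⁻ u, ‖k u v‖ₑ ∂μ ∂ν := by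
        refine lintegral_congr fun v => ?_
        rw [← lintegral_const_mul _ (by fun_prop)]
        simp [enorm_mul]
    _ ≤ ∫⁻ v, ‖h v‖ₑ * M ∂ν := by
        apply lintegral_mono_ae
        filter_upwards [hb] with v hv
        gcongr
    _ < ⊤ := by
        rw [lintegral_mul_const' _ _ hM]
        exact ENNReal.mul_lt_top hh.2 hM.lt_top

noncomputable def rhbK (α x u v : ℝ) : ℝ :=
  if u < v then (u - x) ^ (-α) * (v - u) ^ (α - 1) else 0

noncomputable def rhbS (α t r v : ℝ) : ℝ := (t - r) ^ (-α) * (v - t) ^ α / (v - r)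

lemma rhbK_meas (α x : ℝ) : Measurable (Function.uncurry (rhbK α x)) := by
  unfold rhbK Function.uncurry
  exact Measurable.ite (measurableSet_lt measurable_fst measurable_snd) (by fun_prop) measurable_const

lemma rhbS_meas (α t : ℝ) : Measurable (Function.uncurry (rhbS α t)) := by
  unfold rhbS Function.uncurry
  fun_prop

lemma rhbK_nonneg {α x u : ℝ} (v : ℝ) (h : x < u) : 0 ≤ rhbK α x u v := by
  unfold rhbK
  split_ifs with h1
  · have : 0 < u - x := by linarith
    have : 0 < v - u := by linarith
    positivity
  · rfl

lemma rhbS_nonneg {α t r v : ℝ} (h : r < t) (h' : t < v) : 0 ≤ rhbS α t r v := by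
  unfold rhbS
  have : 0 < t - r := by linarith
  have : 0 < v - t := by linarith
  have : 0 < v - r := by linarith
  positivity

lemma rhbK_lint_lo {α x t v : ℝ} (hx : x < v) (h : v ≤ t) :
    ∫⁻ u in Ioo x t, ENNReal.ofReal (rhbK α x u v) = rhbC α := by
  rw [← rhb_KA hx, ← lintegral_indicator measurableSet_Ioo, ← lintegral_indicator measurableSet_Ioo]
  congr 1
  ext u
  by_cases h1 : u ∈ Ioo x v
  · have h2 : u ∈ Ioo x t := ⟨h1.1, h1.2.trans_le h⟩
    rw [indicator_of_mem h1, indicator_of_mem h2, rhbK, if_pos h1.2]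
  · rw [indicator_of_notMem h1]
    by_cases h2 : u ∈ Ioo x t
    · rw [indicator_of_mem h2, rhbK, if_neg (fun h3 => h1 ⟨h2.1, h3⟩)]; simp
    · rw [indicator_of_notMem h2]

lemma rhbK_lint_hi {α x t v : ℝ} (h : t < v) :
    ∫⁻ u in Ioo x t, ENNReal.ofReal (rhbK α x u v) =
    ∫⁻ u in Ioo x t, ENNReal.ofReal (rhbS α t u v) := by
  have := rhb_KB (α := α) (x := x) h
  unfold rhbS
  rw [← this]
  refine setLIntegral_congr_fun measurableSet_Ioo fun u hu => ?_
  simp only [rhbK, if_pos (hu.2.trans h)]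

lemma rhbK_lint_le {α x t v : ℝ} (hx : x < v) :
    ∫⁻ u in Ioo x t, ENNReal.ofReal (rhbK α x u v) ≤ rhbC α := by
  rw [← rhbK_lint_lo hx (le_max_right t v)]
  exact lintegral_mono_set (Ioo_subset_Ioo_right (le_max_left _ _))

lemma rhbK_lint_enorm {α x t v : ℝ} :
    ∫⁻ u in Ioo x t, ‖rhbK α x u v‖ₑ = ∫⁻ u in Ioo x t, ENNReal.ofReal (rhbK α x u v) :=
  setLIntegral_congr_fun measurableSet_Ioo fun _ hu => Real.enorm_of_nonneg (rhbK_nonneg v hu.1)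

lemma rhbS_lint_enorm {α x t v : ℝ} (h : t < v) :
    ∫⁻ u in Ioo x t, ‖rhbS α t u v‖ₑ = ∫⁻ u in Ioo x t, ENNReal.ofReal (rhbS α t u v) :=
  setLIntegral_congr_fun measurableSet_Ioo fun _ hu => Real.enorm_of_nonneg (rhbS_nonneg hu.2 h)

lemma rhbS_lint_le {α x t v : ℝ} (hx : x < t) (h : t < v) :
    ∫⁻ u in Ioo x t, ‖rhbS α t u v‖ₑ ≤ rhbC α := by
  rw [rhbS_lint_enorm h, ← rhbK_lint_hi h]
  exact rhbK_lint_le (hx.trans h)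

lemma rhbK_int {α x t v : ℝ} :
    ∫ u in Ioo x t, rhbK α x u v = (∫⁻ u in Ioo x t, ENNReal.ofReal (rhbK α x u v)).toReal := by
  apply integral_eq_lintegral_of_nonneg_ae
  · filter_upwards [ae_restrict_mem measurableSet_Ioo] with u hu using rhbK_nonneg v hu.1
  · exact ((rhbK_meas α x).comp (measurable_id.prodMk measurable_const)).aestronglyMeasurable

lemma rhbS_int {α x t v : ℝ} (h : t < v) :
    ∫ u in Ioo x t, rhbS α t u v = (∫⁻ u in Ioo x t, ENNReal.ofReal (rhbS α t u v)).toReal := by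
  apply integral_eq_lintegral_of_nonneg_ae
  · filter_upwards [ae_restrict_mem measurableSet_Ioo] with u hu using rhbS_nonneg hu.2 h
  · exact ((rhbS_meas α t).comp (measurable_id.prodMk measurable_const)).aestronglyMeasurable

lemma rhb_step1 {α x t T : ℝ} {h : ℝ → ℝ} (h0 : 0 < α) (h1 : α < 1)
    (hh : IntegrableOn h (Ioo x T)) :
    ∫ u in Ioo x t, (u - x) ^ (-α) * ∫ v in Ioo u T, h v * (v - u) ^ (α - 1) =
    ∫ v in Ioo x T, h v * ∫ u in Ioo x t, rhbK α x u v := by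
  have hI := rhb_F (μ := volume.restrict (Ioo x t)) (ν := volume.restrict (Ioo x T))
    (k := rhbK α x) (rhbC_ne_top h0 h1) (rhbK_meas α x) (by
      filter_upwards [ae_restrict_mem measurableSet_Ioo] with v hv
      rw [rhbK_lint_enorm]
      exact rhbK_lint_le hv.1) hh
  have := integral_integral_swap hI
  simp only [integral_const_mul] at this
  rw [← this]
  refine setIntegral_congr_fun measurableSet_Ioo fun u hu => ?_
  rw [← integral_const_mul, ← integral_indicator measurableSet_Ioo,
    ← integral_indicator measurableSet_Ioo]
  congr 1
  ext v
  by_cases h2 : v ∈ Ioo u T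
  · have h3 : v ∈ Ioo x T := ⟨hu.1.trans h2.1, h2.2⟩
    rw [indicator_of_mem h2, indicator_of_mem h3, rhbK, if_pos h2.1]; ring
  · rw [indicator_of_notMem h2]
    by_cases h3 : v ∈ Ioo x T
    · rw [indicator_of_mem h3, rhbK, if_neg (fun h4 => h2 ⟨h4, h3.2⟩)]; simp
    · rw [indicator_of_notMem h3]

lemma rhb_step2 {α x T : ℝ} {g : ℝ → ℝ} (h0 : 0 < α) (h1 : α < 1)
    (hg : IntegrableOn g (Ioo x T)) :
    ∫ u in Ioo x T, (u - x) ^ (-α) * ∫ v in Ioo u T, g v * (v - u) ^ (α - 1) =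
    (rhbC α).toReal * ∫ v in Ioo x T, g v := by
  rw [rhb_step1 h0 h1 hg, ← integral_const_mul]
  refine setIntegral_congr_fun measurableSet_Ioo fun v hv => ?_
  rw [rhbK_int, rhbK_lint_lo hv.1 hv.2.le, mul_comm]

lemma rhb_Sint {α x t T : ℝ} {h : ℝ → ℝ} (h0 : 0 < α) (h1 : α < 1) (hxt : x < t)
    (hh : IntegrableOn h (Ioo t T)) :
    Integrable (Function.uncurry fun u v => h v * rhbS α t u v) 
     ((volume.restrict (Ioo x t)).prod (volume.restrict (Ioo t T))) := by
  apply rhb_F (rhbC_ne_top h0 h1) (rhbS_meas α t) _ hh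
  filter_upwards [ae_restrict_mem measurableSet_Ioo] with v hv
  exact rhbS_lint_le hxt hv.1

lemma rhb_Ksplit {α x t T : ℝ} {h : ℝ → ℝ} (h0 : 0 < α) (h1 : α < 1) (hxt : x < t) (htT : t ≤ T)
    (hh : IntegrableOn h (Ioo x T)) :
    ∫ v in Ioo x T, h v * ∫ u in Ioo x t, rhbK α x u v =
    (rhbC α).toReal * (∫ v in Ioo x t, h v) +
      ∫ r in Ioo x t, ∫ v in Ioo t T, h v * rhbS α t r v := by
  have hhx : IntegrableOn h (Ioc x t) := by
    rw [integrableOn_Ioc_iff_integrableOn_Ioo]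
    exact hh.mono_set (Ioo_subset_Ioo_right htT)
  have hht : IntegrableOn h (Ioo t T) := hh.mono_set (Ioo_subset_Ioo_left hxt.le)
  have hS := rhb_Sint h0 h1 hxt hht
  have e1 : ∀ v ∈ Ioc x t, h v * ∫ u in Ioo x t, rhbK α x u v = h v * (rhbC α).toReal := by
    intro v hv
    rw [rhbK_int, rhbK_lint_lo hv.1 hv.2]
  have e2 : ∀ v ∈ Ioo t T, h v * ∫ u in Ioo x t, rhbK α x u v =
      ∫ u in Ioo x t, h v * rhbS α t u v := by
    intro v hv
    rw [rhbK_int, rhbK_lint_hi hv.1, ← rhbS_int hv.1, integral_const_mul]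
  have i1 : IntegrableOn (fun v => h v * ∫ u in Ioo x t, rhbK α x u v) (Ioc x t) :=
    (integrableOn_congr_fun e1 measurableSet_Ioc).2 (hhx.mul_const _)
  have i2 : IntegrableOn (fun v => h v * ∫ u in Ioo x t, rhbK α x u v) (Ioo t T) :=
    (integrableOn_congr_fun e2 measurableSet_Ioo).2 hS.integral_prod_right
  rw [integral_integral_swap hS, ← setIntegral_congr_fun measurableSet_Ioo e2,
    mul_comm, ← integral_mul_const,
    ← integral_Ioc_eq_integral_Ioo (f := fun a => h a * (rhbC α).toReal),
    ← setIntegral_congr_fun measurableSet_Ioc e1]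
  rcases htT.eq_or_lt with rfl | hlt
  · simp [integral_Ioc_eq_integral_Ioo]
  rw [← setIntegral_union _ measurableSet_Ioo i1 i2, Ioc_union_Ioo_eq_Ioo hxt.le hlt]
  exact Set.disjoint_left.2 fun a ha hb => not_lt.2 ha.2 hb.1

lemma rhb_bal {α t T : ℝ} {g h : ℝ → ℝ} (h0 : 0 < α) (h1 : α < 1) (ht : 0 ≤ t) (htT : t ≤ T)
    (hg : IntegrableOn g (Ioo 0 T)) (hh : IntegrableOn h (Ioo 0 T))
    (heq : ∀ᵐ u ∂(volume.restrict (Ioo 0 T)), ∫ v in Ioo u T, g v * (v - u) ^ (α - 1) =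
      (Iic t).indicator (fun u => ∫ v in Ioo u T, h v * (v - u) ^ (α - 1)) u) :
    (∀ᵐ r ∂(volume.restrict (Ioo t T)), g r = 0) ∧
    (∀ᵐ r ∂(volume.restrict (Ioo 0 t)), 
      (rhbC α).toReal * (g r - h r) = ∫ v in Ioo t T, h v * rhbS α t r v) := by
  have hc : (rhbC α).toReal ≠ 0 := ENNReal.toReal_ne_zero.2 ⟨rhbC_ne_zero α, rhbC_ne_top h0 h1⟩
  have key : ∀ x, 0 ≤ x → (rhbC α).toReal * ∫ v in Ioo x T, g v =
      ∫ u in Ioo x T, (Iic t).indicator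
        (fun u => (u - x) ^ (-α) * ∫ v in Ioo u T, h v * (v - u) ^ (α - 1)) u := by
    intro x hx
    rw [← rhb_step2 h0 h1 (hg.mono_set (Ioo_subset_Ioo_left hx))]
    apply integral_congr_ae
    filter_upwards [ae_restrict_of_ae_restrict_of_subset (Ioo_subset_Ioo_left hx) heq] with u hu
    rw [hu]
    simp only [indicator]
    split_ifs <;> simp
  have hhi : ∀ x, t ≤ x → ∫ v in Ioo x T, g v = 0 := by
    intro x hx
    have := key x (ht.trans hx)
    have h2 : ∫ u in Ioo x T, (Iic t).indicator
        (fun u => (u - x) ^ (-α) * ∫ v in Ioo u T, h v * (v - u) ^ (α - 1)) u = 0 := by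
      apply setIntegral_eq_zero_of_forall_eq_zero
      intro u hu
      apply indicator_of_notMem
      intro (h : u ≤ t)
      have := hu.1
      linarith
    rw [h2] at this
    exact (mul_eq_zero.1 this).resolve_left hc
  refine ⟨rhb_D (hg.mono_set (Ioo_subset_Ioo_left ht)) fun x hx => hhi x hx.1.le, ?_⟩
  rcases ht.eq_or_lt with rfl | htp
  · simp
  have hgt : IntegrableOn g (Ioo 0 t) := hg.mono_set (Ioo_subset_Ioo_right htT)
  have hht : IntegrableOn h (Ioo 0 t) := hh.mono_set (Ioo_subset_Ioo_right htT)
  have hS : IntegrableOn (fun r => ∫ v in Ioo t T, h v * rhbS α t r v) (Ioo 0 t) :=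
    (rhb_Sint h0 h1 htp (hh.mono_set (Ioo_subset_Ioo_left ht))).integral_prod_left
  have hA : IntegrableOn (fun r => (rhbC α).toReal * (g r - h r)) (Ioo 0 t) :=
    (hgt.sub hht).const_mul _
  have := rhb_D (hA.sub hS) (fun x hx => ?_)
  · filter_upwards [this] with r hr
    exact sub_eq_zero.1 hr
  have hsub : Ioo x t ⊆ Ioo 0 t := Ioo_subset_Ioo_left hx.1.le
  simp only [Pi.sub_apply]
  rw [integral_sub (hA.mono_set hsub) (hS.mono_set hsub), integral_const_mul,
    integral_sub (hgt.mono_set hsub) (hht.mono_set hsub)]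
  have k1 := key x hx.1.le
  have hle : ∫ v in Ioo x T, g v = ∫ v in Ioo x t, g v := by
    rcases htT.eq_or_lt with rfl | hlt
    · rfl
    rw [← Ioc_union_Ioo_eq_Ioo hx.2.le hlt, setIntegral_union _ measurableSet_Ioo, hhi t le_rfl,
      add_zero, integral_Ioc_eq_integral_Ioo]
    · rw [integrableOn_Ioc_iff_integrableOn_Ioo]
      exact hgt.mono_set hsub
    · exact hg.mono_set (Ioo_subset_Ioo_left ht)
    · exact Set.disjoint_left.2 fun a ha hb => not_lt.2 ha.2 hb.1
  have hR : ∫ u in Ioo x T, (Iic t).indicator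
        (fun u => (u - x) ^ (-α) * ∫ v in Ioo u T, h v * (v - u) ^ (α - 1)) u =
      ∫ u in Ioo x t, (u - x) ^ (-α) * ∫ v in Ioo u T, h v * (v - u) ^ (α - 1) := by
    rw [setIntegral_indicator measurableSet_Iic]
    apply setIntegral_congr_set
    rcases htT.eq_or_lt with rfl | hlt
    · have : Ioo x t ∩ Iic t = Ioo x t := inter_eq_left.2 fun y hy => hy.2.le
      rw [this]
      exact Filter.EventuallyEq.rfl
    · have : Ioo x T ∩ Iic t = Ioc x t := by
        ext y; simp only [mem_inter_iff, mem_Ioo, mem_Iic, mem_Ioc]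
        constructor
        · rintro ⟨⟨a, b⟩, c⟩; exact ⟨a, c⟩
        · rintro ⟨a, c⟩; exact ⟨⟨a, c.trans_lt hlt⟩, c⟩
      rw [this]
      exact Ioo_ae_eq_Ioc.symm
  have hhx : IntegrableOn h (Ioo x T) := hh.mono_set (Ioo_subset_Ioo_left hx.1.le)
  rw [hR, rhb_step1 h0 h1 hhx, rhb_Ksplit h0 h1 hx.2 htT hhx, hle] at k1
  linarith

lemma rhb_schur {μ ν : Measure ℝ} [SFinite μ] [SFinite ν] {k : ℝ → ℝ → ENNReal} {w z f : ℝ → ENNReal}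
    {q : ℝ} {C1 C2 : ENNReal} (hq : 1 < q) (hk : Measurable (Function.uncurry k)) (hw : Measurable w)
    (hz : Measurable z) (hf : AEMeasurable f ν) (hC1 : C1 ≠ ⊤)
    (hw0 : ∀ᵐ v ∂ν, w v ≠ 0 ∧ w v ≠ ⊤)
    (h1 : ∀ᵐ r ∂μ, ∫⁻ v, k r v * (w v) ^ (-(1 / (q - 1))) ∂ν ≤ C1 * (z r) ^ (-(1 / (q - 1))))
    (h2 : ∀ᵐ v ∂ν, ∫⁻ r, k r v * (z r)⁻¹ ∂μ ≤ C2 * (w v)⁻¹) :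
    ∫⁻ r, (∫⁻ v, f v * k r v ∂ν) ^ q ∂μ ≤ C1 ^ (q - 1) * C2 * ∫⁻ v, f v ^ q ∂ν := by
  have hq1 : 0 < q - 1 := by linarith
  have hq0 : 0 < q := by linarith
  have hconj : (q / (q - 1)).HolderConjugate q := (Real.HolderConjugate.conjExponent hq).symm
  have hkr : ∀ r, Measurable (k r) := fun r => hk.comp (measurable_const.prodMk measurable_id)
  have hkv : ∀ v, Measurable (fun r => k r v) := fun v => hk.comp (measurable_id.prodMk measurable_const)
  have step : ∀ᵐ r ∂μ, (∫⁻ v, f v * k r v ∂ν) ^ q ≤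
      C1 ^ (q - 1) * ((z r)⁻¹ * ∫⁻ v, k r v * (w v * f v ^ q) ∂ν) := by
    filter_upwards [h1] with r hr
    have hol := ENNReal.lintegral_mul_le_Lp_mul_Lq ν hconj
      (f := fun v => k r v ^ ((q - 1) / q) * w v ^ (-(1 / q)))
      (g := fun v => k r v ^ (1 / q) * (w v ^ (1 / q) * f v))
      (((hkr r).pow_const _).mul (hw.pow_const _)).aemeasurable
      (((hkr r).pow_const _).aemeasurable.mul ((hw.pow_const _).aemeasurable.mul hf))
    have e0 : ∫⁻ v, f v * k r v ∂ν = ∫⁻ v, ((fun v => k r v ^ ((q - 1) / q) * w v ^ (-(1 / q))) *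
        (fun v => k r v ^ (1 / q) * (w v ^ (1 / q) * f v))) v ∂ν := by
      apply lintegral_congr_ae
      filter_upwards [hw0] with v hv
      simp only [Pi.mul_apply]
      have a1 : k r v ^ ((q - 1) / q) * k r v ^ (1 / q) = k r v := by
        rw [← ENNReal.rpow_add_of_nonneg _ _ (by positivity) (by positivity)]
        have : (q - 1) / q + 1 / q = 1 := by field_simp; ring
        rw [this, ENNReal.rpow_one]
      have a2 : w v ^ (-(1 / q)) * w v ^ (1 / q) = 1 := by
        rw [← ENNReal.rpow_add _ _ hv.1 hv.2]; simp
      calc f v * k r v = f v * (k r v ^ ((q - 1) / q) * k r v ^ (1 / q)) *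
            (w v ^ (-(1 / q)) * w v ^ (1 / q)) := by rw [a1, a2, mul_one]
        _ = _ := by ring
    have e1 : ∀ v, (k r v ^ ((q - 1) / q) * w v ^ (-(1 / q))) ^ (q / (q - 1)) =
        k r v * w v ^ (-(1 / (q - 1))) := by
      intro v
      rw [ENNReal.mul_rpow_of_nonneg _ _ (by positivity), ← ENNReal.rpow_mul, ← ENNReal.rpow_mul]
      have b1 : (q - 1) / q * (q / (q - 1)) = 1 := by field_simp
      have b2 : -(1 / q) * (q / (q - 1)) = -(1 / (q - 1)) := by field_simp
      rw [b1, b2, ENNReal.rpow_one]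
    have e2 : ∀ v, (k r v ^ (1 / q) * (w v ^ (1 / q) * f v)) ^ q = k r v * (w v * f v ^ q) := by
      intro v
      rw [ENNReal.mul_rpow_of_nonneg _ _ hq0.le, ENNReal.mul_rpow_of_nonneg _ _ hq0.le,
        ← ENNReal.rpow_mul, ← ENNReal.rpow_mul]
      have b1 : 1 / q * q = 1 := by field_simp
      rw [b1, ENNReal.rpow_one, ENNReal.rpow_one]
    rw [← e0] at hol
    simp only [e1, e2] at hol
    calc (∫⁻ v, f v * k r v ∂ν) ^ q ≤ _ := ENNReal.rpow_le_rpow hol hq0.le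
      _ = (∫⁻ v, k r v * w v ^ (-(1 / (q - 1))) ∂ν) ^ (q - 1) *
          ∫⁻ v, k r v * (w v * f v ^ q) ∂ν := by
        rw [ENNReal.mul_rpow_of_nonneg _ _ hq0.le, ← ENNReal.rpow_mul, ← ENNReal.rpow_mul]
        have b1 : 1 / q * q = 1 := by field_simp
        have b2 : 1 / (q / (q - 1)) * q = q - 1 := by field_simp
        rw [b1, b2, ENNReal.rpow_one]
      _ ≤ (C1 * (z r) ^ (-(1 / (q - 1)))) ^ (q - 1) * ∫⁻ v, k r v * (w v * f v ^ q) ∂ν := by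
        gcongr
      _ = _ := by
        rw [ENNReal.mul_rpow_of_nonneg _ _ hq1.le, ← ENNReal.rpow_mul]
        have b2 : -(1 / (q - 1)) * (q - 1) = -1 := by field_simp
        rw [b2, ENNReal.rpow_neg_one, mul_assoc]
  calc _ ≤ ∫⁻ r, C1 ^ (q - 1) * ((z r)⁻¹ * ∫⁻ v, k r v * (w v * f v ^ q) ∂ν) ∂μ :=
        lintegral_mono_ae step
    _ = C1 ^ (q - 1) * ∫⁻ r, ∫⁻ v, (z r)⁻¹ * (k r v * (w v * f v ^ q)) ∂ν ∂μ := by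
        rw [lintegral_const_mul' _ _ (ENNReal.rpow_ne_top_of_nonneg hq1.le hC1)]
        congr 1
        refine lintegral_congr fun r => ?_
        rw [lintegral_const_mul'']
        exact (hkr r).aemeasurable.mul (hw.aemeasurable.mul (hf.pow_const _))
    _ = C1 ^ (q - 1) * ∫⁻ v, (∫⁻ r, k r v * (z r)⁻¹ ∂μ) * (w v * f v ^ q) ∂ν := by
        rw [lintegral_lintegral_swap]
        · congr 1
          refine lintegral_congr fun v => ?_
          rw [← lintegral_mul_const (f := fun r => k r v * (z r)⁻¹) _ ((hkv v).mul hz.inv)]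
          refine lintegral_congr fun r => ?_
          ring
        · exact (hz.inv.comp measurable_fst).aemeasurable.mul (hk.aemeasurable.mul
            ((hw.comp measurable_snd).aemeasurable.mul (hf.comp_snd.pow_const _)))
    _ ≤ C1 ^ (q - 1) * ∫⁻ v, C2 * f v ^ q ∂ν := by
        gcongr 1
        apply lintegral_mono_ae
        filter_upwards [h2, hw0] with v hv hv0
        calc _ ≤ C2 * (w v)⁻¹ * (w v * f v ^ q) := by gcongr
          _ = C2 * ((w v)⁻¹ * w v) * f v ^ q := by ring
          _ = _ := by rw [ENNReal.inv_mul_cancel hv0.1 hv0.2, mul_one]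
    _ = _ := by
        rw [lintegral_const_mul'' _ (hf.pow_const _), mul_assoc]

lemma rhb_L0r {β C : ℝ} 
    (h : ∀ x : ℝ, 0 < x → ∫⁻ y in Ioi (0:ℝ), ENNReal.ofReal (y ^ β / (x + y)) ≤ ENNReal.ofReal (C * x ^ β))
    {r t : ℝ} (hr : r < t) (T : ℝ) :
    ∫⁻ v in Ioo t T, ENNReal.ofReal ((v - t) ^ β / (v - r)) ≤ ENNReal.ofReal (C * (t - r) ^ β) := by
  refine le_trans ?_ (h (t - r) (by linarith))
  rw [← lintegral_indicator measurableSet_Ioi, ← lintegral_indicator measurableSet_Ioo,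
    ← lintegral_sub_right_eq_self ((Ioi 0).indicator _) t]
  refine lintegral_mono fun v => ?_
  by_cases hv : v ∈ Ioo t T
  · have : v - t ∈ Ioi (0:ℝ) := by simpa using hv.1
    rw [indicator_of_mem hv, indicator_of_mem this]
    ring_nf; rfl
  · rw [indicator_of_notMem hv]; exact zero_le

lemma rhb_L0l {β C : ℝ} 
    (h : ∀ x : ℝ, 0 < x → ∫⁻ y in Ioi (0:ℝ), ENNReal.ofReal (y ^ β / (x + y)) ≤ ENNReal.ofReal (C * x ^ β))
    {t v : ℝ} (hr : t < v) (a : ℝ) :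
    ∫⁻ r in Ioo a t, ENNReal.ofReal ((t - r) ^ β / (v - r)) ≤ ENNReal.ofReal (C * (v - t) ^ β) := by
  refine le_trans ?_ (h (v - t) (by linarith))
  rw [← lintegral_indicator measurableSet_Ioi, ← lintegral_indicator measurableSet_Ioo,
    ← lintegral_sub_left_eq_self ((Ioi 0).indicator _) t]
  refine lintegral_mono fun r => ?_
  by_cases hv : r ∈ Ioo a t
  · have : t - r ∈ Ioi (0:ℝ) := by simpa using hv.2
    rw [indicator_of_mem hv, indicator_of_mem this]
    ring_nf; rfl
  · rw [indicator_of_notMem hv]; exact zero_le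

lemma rhb_hilb {α q : ℝ} (h0 : 0 < α) (h1 : α < 1 / 2) (hq : 2 ≤ q) (hαq : α * q < 1) :
    ∃ C : ENNReal, C ≠ ⊤ ∧ ∀ (t T : ℝ) (f : ℝ → ENNReal), AEMeasurable f (volume.restrict (Ioo t T)) →
      ∫⁻ r in Ioo 0 t, (∫⁻ v in Ioo t T, f v * ENNReal.ofReal (rhbS α t r v)) ^ q ≤
        C * ∫⁻ v in Ioo t T, f v ^ q := by
  have hq1 : 0 < q - 1 := by linarith
  obtain ⟨θ, hθ1, hθ2⟩ : ∃ θ, α * (q - 1) < θ ∧ θ < 1 - α := exists_between (by linarith)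
  have hθ0 : 0 < θ := lt_trans (by positivity) hθ1
  have hd1 : α < θ / (q - 1) := by rwa [lt_div_iff₀ hq1]
  have hd2 : θ / (q - 1) < 1 := by rw [div_lt_one hq1]; linarith
  obtain ⟨C1, hC1, H1⟩ := rhb_L0 (β := α - θ / (q - 1)) (by linarith) (by linarith)
  obtain ⟨C2, hC2, H2⟩ := rhb_L0 (β := -α - θ) (by linarith) (by linarith)
  refine ⟨(ENNReal.ofReal C1) ^ (q - 1) * ENNReal.ofReal C2,
    ENNReal.mul_ne_top (ENNReal.rpow_ne_top_of_nonneg hq1.le ENNReal.ofReal_ne_top)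
      ENNReal.ofReal_ne_top, fun t T f hf => ?_⟩
  refine rhb_schur (w := fun v => ENNReal.ofReal ((v - t) ^ θ))
    (z := fun r => ENNReal.ofReal ((t - r) ^ θ)) (by linarith)
    (k := fun r v => ENNReal.ofReal (rhbS α t r v))
    (rhbS_meas α t).ennreal_ofReal (by fun_prop) (by fun_prop) hf ENNReal.ofReal_ne_top ?_ ?_ ?_
  · filter_upwards [ae_restrict_mem measurableSet_Ioo] with v hv
    have : 0 < v - t := by linarith [hv.1]
    refine ⟨?_, ENNReal.ofReal_ne_top⟩
    simp only [ne_eq, ENNReal.ofReal_eq_zero, not_le]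
    positivity
  · filter_upwards [ae_restrict_mem measurableSet_Ioo] with r hr
    have a1 : 0 < t - r := by linarith [hr.2]
    calc _ = ∫⁻ v in Ioo t T, ENNReal.ofReal ((t - r) ^ (-α)) *
            ENNReal.ofReal ((v - t) ^ (α - θ / (q - 1)) / (v - r)) := by
          refine setLIntegral_congr_fun measurableSet_Ioo fun v hv => ?_
          have a2 : 0 < v - t := by linarith [hv.1]
          have a3 : 0 < v - r := by linarith
          rw [ENNReal.ofReal_rpow_of_pos (by positivity), ← ENNReal.ofReal_mul (rhbS_nonneg hr.2 hv.1),
            ← ENNReal.ofReal_mul (by positivity), rhbS, ← rpow_mul a2.le]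
          congr 1
          rw [sub_eq_add_neg α, rpow_add a2]
          have : θ * -(1 / (q - 1)) = -(θ / (q - 1)) := by ring
          rw [this]
          ring
      _ ≤ ENNReal.ofReal ((t - r) ^ (-α)) * ENNReal.ofReal (C1 * (t - r) ^ (α - θ / (q - 1))) := by
          rw [lintegral_const_mul' _ _ ENNReal.ofReal_ne_top]
          gcongr
          exact rhb_L0r H1 hr.2 T
      _ = _ := by
          rw [ENNReal.ofReal_rpow_of_pos (by positivity), ← ENNReal.ofReal_mul (by positivity),
            ← ENNReal.ofReal_mul hC1.le, ← rpow_mul a1.le]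
          congr 1
          rw [mul_left_comm, ← rpow_add a1]
          congr 2
          ring
  · filter_upwards [ae_restrict_mem measurableSet_Ioo] with v hv
    have a2 : 0 < v - t := by linarith [hv.1]
    calc _ = ∫⁻ r in Ioo 0 t, ENNReal.ofReal ((v - t) ^ α) *
            ENNReal.ofReal ((t - r) ^ (-α - θ) / (v - r)) := by
          refine setLIntegral_congr_fun measurableSet_Ioo fun r hr => ?_
          have a1 : 0 < t - r := by linarith [hr.2]
          have a3 : 0 < v - r := by linarith
          rw [← ENNReal.ofReal_inv_of_pos (by positivity), ← ENNReal.ofReal_mul (rhbS_nonneg hr.2 hv.1),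
            ← ENNReal.ofReal_mul (by positivity), rhbS, ← rpow_neg a1.le]
          congr 1
          rw [sub_eq_add_neg (-α), rpow_add a1]
          ring
      _ ≤ ENNReal.ofReal ((v - t) ^ α) * ENNReal.ofReal (C2 * (v - t) ^ (-α - θ)) := by
          rw [lintegral_const_mul' _ _ ENNReal.ofReal_ne_top]
          gcongr
          exact rhb_L0l H2 hv.1 0
      _ = _ := by
          rw [← ENNReal.ofReal_inv_of_pos (by positivity), ← ENNReal.ofReal_mul (by positivity),
            ← ENNReal.ofReal_mul hC2.le, ← rpow_neg a2.le]
          congr 1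
          rw [mul_left_comm, ← rpow_add a2]
          congr 2
          ring

lemma rhb_memLp {T α : ℝ} (hα : α ∈ Set.Ioo (0 : ℝ) (1 / 2)) (hT : 0 < T) :
    MemLp (fun s : ℝ => s ^ (-α)) 2 (volume.restrict (Ioo 0 T)) := by
  rw [memLp_two_iff_integrable_sq (by fun_prop)]
  have : IntegrableOn (fun s : ℝ => s ^ (-(2 * α))) (Ioo 0 T) := by
    rw [← intervalIntegrable_iff_integrableOn_Ioo_of_le hT.le]
    exact intervalIntegral.intervalIntegrable_rpow' (by linarith [hα.2])
  refine (integrableOn_congr_fun ?_ measurableSet_Ioo).2 this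
  intro s hs
  simp only
  rw [← rpow_natCast, ← rpow_mul hs.1.le]
  congr 1; push_cast; ring

lemma rhb_int {T α : ℝ} {φ : ℝ → ℝ} (hα : α ∈ Set.Ioo (0 : ℝ) (1 / 2)) (hT : 0 < T)
    (h : MemLp φ 2 (volume.restrict (Icc 0 T))) :
    IntegrableOn (fun s => s ^ (-α) * φ s) (Ioo 0 T) :=
  (rhb_memLp hα hT).integrable_mul (h.mono_measure (Measure.restrict_mono Ioo_subset_Icc_self le_rfl))

lemma rhb_rep {T α : ℝ} (hT : 0 < T) (hα : α ∈ Set.Ioo (0 : ℝ) (1 / 2)) {b φ φ' : ℝ → ℝ} {t : ℝ}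
    (ht : 0 ≤ t) (htT : t ≤ T) (hφ : memLambda T α b φ)
    (hφ' : memLambda T α (Set.indicator (Set.Icc 0 t) b) φ') :
    (∀ᵐ r ∂(volume.restrict (Ioo t T)), φ' r = 0) ∧
    (∀ᵐ r ∂(volume.restrict (Ioo 0 t)), ‖φ' r - φ r‖ₑ ≤
      (rhbC α)⁻¹ * ∫⁻ v in Ioo t T, ‖φ v‖ₑ * ENNReal.ofReal (rhbS α t r v)) := by
  have h1 : α < 1 := by linarith [hα.2]
  have hct := rhbC_ne_top hα.1 h1
  have hc0 := rhbC_ne_zero α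
  have hG : 0 < Real.Gamma α := Real.Gamma_pos_of_pos hα.1
  obtain ⟨r1, r2⟩ := rhb_bal hα.1 h1 ht htT (rhb_int hα hT hφ'.1) (rhb_int hα hT hφ.1) (by
    filter_upwards [ae_restrict_of_ae_restrict_of_subset Ioo_subset_Icc_self hφ.2,
      ae_restrict_of_ae_restrict_of_subset Ioo_subset_Icc_self hφ'.2,
      ae_restrict_mem measurableSet_Ioo] with u e1 e2 hu
    have hu0 : 0 < u ^ α := rpow_pos_of_pos hu.1 α
    unfold fracInt at e1 e2
    by_cases hut : u ≤ t
    · rw [indicator_of_mem (show u ∈ Icc 0 t from ⟨hu.1.le, hut⟩), e1] at e2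
      rw [indicator_of_mem (show u ∈ Iic t from hut)]
      have := mul_left_cancel₀ (by positivity) (mul_left_cancel₀ hu0.ne' e2)
      exact this.symm
    · rw [indicator_of_notMem (fun h => hut h.2)] at e2
      rw [indicator_of_notMem (show u ∉ Iic t from hut)]
      have := (mul_eq_zero.1 ((mul_eq_zero.1 e2.symm).resolve_left hu0.ne')).resolve_left
        (by positivity)
      exact this)
  constructor
  · filter_upwards [r1, ae_restrict_mem measurableSet_Ioo] with r hr hrm
    have : 0 < r ^ (-α) := rpow_pos_of_pos (ht.trans_lt hrm.1) _
    exact (mul_eq_zero.1 hr).resolve_left this.ne'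
  · filter_upwards [r2, ae_restrict_mem measurableSet_Ioo] with r hr hrm
    have hp : 0 < r ^ α := rpow_pos_of_pos hrm.1 _
    rw [← mul_sub] at hr
    have e : (rhbC α).toReal * (φ' r - φ r) =
        ∫ v in Ioo t T, r ^ α * (v ^ (-α) * φ v * rhbS α t r v) := by
      rw [integral_const_mul, ← hr, rpow_neg hrm.1.le]
      field_simp
    suffices H : rhbC α * ‖φ' r - φ r‖ₑ ≤
        ∫⁻ v in Ioo t T, ‖φ v‖ₑ * ENNReal.ofReal (rhbS α t r v) by
      calc ‖φ' r - φ r‖ₑ = (rhbC α)⁻¹ * (rhbC α * ‖φ' r - φ r‖ₑ) := by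
            rw [← mul_assoc, ENNReal.inv_mul_cancel hc0 hct, one_mul]
        _ ≤ _ := by gcongr
    calc rhbC α * ‖φ' r - φ r‖ₑ = ‖(rhbC α).toReal * (φ' r - φ r)‖ₑ := by
          rw [enorm_mul, Real.enorm_of_nonneg ENNReal.toReal_nonneg, ENNReal.ofReal_toReal hct]
      _ ≤ ∫⁻ v in Ioo t T, ‖r ^ α * (v ^ (-α) * φ v * rhbS α t r v)‖ₑ := by
          rw [e]; exact enorm_integral_le_lintegral_enorm _
      _ ≤ _ := by
          refine setLIntegral_mono' measurableSet_Ioo fun v hv => ?_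
          have hS : 0 ≤ rhbS α t r v := rhbS_nonneg hrm.2 hv.1
          rw [← Real.enorm_of_nonneg hS, ← enorm_mul]
          have hv0 : 0 < v := ht.trans_lt hv.1
          have hle : r ^ α * v ^ (-α) ≤ 1 := by
            rw [rpow_neg hv0.le, ← div_eq_mul_inv, div_le_one (by positivity)]
            exact rpow_le_rpow hrm.1.le (hrm.2.trans hv.1).le hα.1.le
          have : 0 < v ^ (-α) := rpow_pos_of_pos hv0 _
          rw [Real.enorm_eq_ofReal_abs, Real.enorm_eq_ofReal_abs]
          apply ENNReal.ofReal_le_ofReal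
          calc |r ^ α * (v ^ (-α) * φ v * rhbS α t r v)| =
              |(r ^ α * v ^ (-α)) * (φ v * rhbS α t r v)| := by congr 1; ring
            _ = (r ^ α * v ^ (-α)) * |φ v * rhbS α t r v| := by
              rw [abs_mul, abs_of_pos (by positivity)]
            _ ≤ 1 * |φ v * rhbS α t r v| := by gcongr
            _ = _ := one_mul _

lemma rhb_Lq {α q : ℝ} (hα : α ∈ Set.Ioo (0 : ℝ) (1 / 2)) (hq : 2 ≤ q) (hαq : α * q < 1) :
    ∃ C : ENNReal, C ≠ ⊤ ∧ ∀ (T t : ℝ) (b φ φ' : ℝ → ℝ), 0 < T → 0 ≤ t → t ≤ T →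
      memLambda T α b φ → memLambda T α (Set.indicator (Set.Icc 0 t) b) φ' →
      eLpNorm (fun x => φ' x - φ x) (ENNReal.ofReal q) (volume.restrict (Ioo 0 t)) ≤
        C * eLpNorm φ (ENNReal.ofReal q) (volume.restrict (Ioo t T)) := by
  obtain ⟨C, hC, H⟩ := rhb_hilb hα.1 hα.2 hq hαq
  have hq0 : 0 < q := by linarith
  have hc1 : (rhbC α)⁻¹ ≠ ⊤ := ENNReal.inv_ne_top.2 (rhbC_ne_zero α)
  refine ⟨(rhbC α)⁻¹ * C ^ (1 / q), ENNReal.mul_ne_top hc1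
    (ENNReal.rpow_ne_top_of_nonneg (by positivity) hC), ?_⟩
  intro T t b φ φ' hT ht htT h1 h2
  have hr := (rhb_rep hT hα ht htT h1 h2).2
  have hmeas : AEMeasurable (fun v => ‖φ v‖ₑ) (volume.restrict (Ioo t T)) :=
    (h1.1.aestronglyMeasurable.mono_measure (Measure.restrict_mono
      ((Ioo_subset_Ioo_left ht).trans Ioo_subset_Icc_self) le_rfl)).enorm
  have hq' : ENNReal.ofReal q ≠ 0 := by simpa using hq0
  rw [eLpNorm_eq_lintegral_rpow_enorm_toReal hq' ENNReal.ofReal_ne_top,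
    eLpNorm_eq_lintegral_rpow_enorm_toReal hq' ENNReal.ofReal_ne_top, ENNReal.toReal_ofReal hq0.le]
  calc _ ≤ (∫⁻ r in Ioo 0 t, ((rhbC α)⁻¹ * ∫⁻ v in Ioo t T, ‖φ v‖ₑ *
          ENNReal.ofReal (rhbS α t r v)) ^ q) ^ (1 / q) := by
        apply ENNReal.rpow_le_rpow _ (by positivity)
        apply lintegral_mono_ae
        filter_upwards [hr] with r hr
        exact ENNReal.rpow_le_rpow hr hq0.le
    _ = ((rhbC α)⁻¹ ^ q * ∫⁻ r in Ioo 0 t, (∫⁻ v in Ioo t T, ‖φ v‖ₑ *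
          ENNReal.ofReal (rhbS α t r v)) ^ q) ^ (1 / q) := by
        rw [← lintegral_const_mul' _ _ (ENNReal.rpow_ne_top_of_nonneg hq0.le hc1)]
        simp only [ENNReal.mul_rpow_of_nonneg _ _ hq0.le]
    _ ≤ ((rhbC α)⁻¹ ^ q * (C * ∫⁻ v in Ioo t T, ‖φ v‖ₑ ^ q)) ^ (1 / q) := by
        gcongr
        exact H t T _ hmeas
    _ = _ := by
        rw [ENNReal.mul_rpow_of_nonneg _ _ (by positivity),
          ENNReal.mul_rpow_of_nonneg _ _ (by positivity), ← ENNReal.rpow_mul,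
          mul_one_div_cancel hq0.ne', ENNReal.rpow_one, mul_assoc]

lemma rhb_split {f : ℝ → ℝ} {a b c : ℝ} (hab : a ≤ b) (hbc : b ≤ c) {q : ENNReal} (hq : 1 ≤ q)
    (hf : AEStronglyMeasurable f (volume.restrict (Ioo a c))) :
    eLpNorm f q (volume.restrict (Ioo a c)) ≤
      eLpNorm f q (volume.restrict (Ioo a b)) + eLpNorm f q (volume.restrict (Ioo b c)) := by
  have e : f =ᵐ[volume.restrict (Ioo a c)] (Ioo a b).indicator f + (Ioo b c).indicator f := by
    have hb : ∀ᵐ x ∂(volume.restrict (Ioo a c)), x ≠ b :=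
      ae_restrict_of_ae (Measure.ae_ne volume b)
    filter_upwards [hb, ae_restrict_mem measurableSet_Ioo] with x hx hxm
    rw [Pi.add_apply]
    rcases lt_or_gt_of_ne hx with h | h
    · rw [indicator_of_mem (show x ∈ Ioo a b from ⟨hxm.1, h⟩),
        indicator_of_notMem (show x ∉ Ioo b c from fun h' => h.not_gt h'.1), add_zero]
    · rw [indicator_of_mem (show x ∈ Ioo b c from ⟨h, hxm.2⟩),
        indicator_of_notMem (show x ∉ Ioo a b from fun h' => h.not_gt h'.2), zero_add]
  rw [eLpNorm_congr_ae e]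
  refine (eLpNorm_add_le (hf.indicator measurableSet_Ioo) (hf.indicator measurableSet_Ioo) hq).trans ?_
  rw [eLpNorm_indicator_eq_eLpNorm_restrict measurableSet_Ioo,
    eLpNorm_indicator_eq_eLpNorm_restrict measurableSet_Ioo,
    Measure.restrict_restrict measurableSet_Ioo, Measure.restrict_restrict measurableSet_Ioo,
    inter_eq_left.2 (Ioo_subset_Ioo_right hbc), inter_eq_left.2 (Ioo_subset_Ioo_left hab)]

/-- Lemma 4.9.1 (case `n = 1`): Hölder estimate for the representatives of
`b·1_{[0,t]}`.  For every `δ < min((p-2)/(2p), α, (1-αp)/p)` there is a constant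
`C_δ = C(α,p,δ,T)` with `‖φ_t − φ_s‖_{L²} ≤ C_δ ‖φ_b‖_{L^p} (t-s)^δ` for `0 ≤ s ≤ t ≤ T`. -/
theorem rep_holder_bound (T α p : ℝ) (hT : 0 < T) (hα : α ∈ Set.Ioo (0 : ℝ) (1 / 2))
    (hp : p ∈ Set.Ioo 2 (1 / α)) (δ : ℝ) (hδ0 : 0 < δ)
    (hδ : δ < min (min ((p - 2) / (2 * p)) α) ((1 - α * p) / p)) :
    ∃ C : ℝ, 0 < C ∧ ∀ b φb : ℝ → ℝ, memLambda T α b φb →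
      MemLp φb (ENNReal.ofReal p) (volume.restrict (Set.Icc 0 T)) →
      ∀ s t : ℝ, 0 ≤ s → s ≤ t → t ≤ T →
      ∀ φs φt : ℝ → ℝ,
        memLambda T α (Set.indicator (Set.Icc 0 s) b) φs →
        memLambda T α (Set.indicator (Set.Icc 0 t) b) φt →
        eLpNorm (fun x => φt x - φs x) 2 (volume.restrict (Set.Icc 0 T)) ≤
          ENNReal.ofReal (C *
            (eLpNorm φb (ENNReal.ofReal p) (volume.restrict (Set.Icc 0 T))).toReal *
            (t - s) ^ δ) := by

  obtain ⟨hp2, hpα⟩ := hp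
  have hp0 : 0 < p := by linarith
  have hαp : α * p < 1 := by
    rw [lt_div_iff₀ hα.1] at hpα; linarith
  have hδγ : δ < 1 / 2 - 1 / p := by
    have : (p - 2) / (2 * p) = 1 / 2 - 1 / p := by field_simp
    rw [← this]
    exact hδ.trans_le ((min_le_left _ _).trans (min_le_left _ _))
  obtain ⟨Cp, hCp, Hp⟩ := rhb_Lq hα hp2.le hαp
  obtain ⟨C2, hC2, H2⟩ := rhb_Lq hα le_rfl (show α * 2 < 1 by linarith [hα.2])
  have e2 : ENNReal.ofReal 2 = 2 := by simp
  rw [e2] at H2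
  set K : ENNReal := (C2 + 1) * (1 + Cp) with hK
  have hKt : K ≠ ⊤ := ENNReal.mul_ne_top (by simp [hC2]) (by simp [hCp])
  have hK0 : K ≠ 0 := by simp [hK]
  refine ⟨K.toReal * T ^ (1 / 2 - 1 / p - δ),
    mul_pos (ENNReal.toReal_pos hK0 hKt) (rpow_pos_of_pos hT _), ?_⟩
  intro b φb hb hbp s t hs hst htT φs φt hφs hφt
  have ht : 0 ≤ t := hs.trans hst
  have hsT : s ≤ T := hst.trans htT
  set N := eLpNorm φb (ENNReal.ofReal p) (volume.restrict (Set.Icc 0 T)) with hN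
  have hNt : N ≠ ⊤ := hbp.2.ne
  have hmono : ∀ {a c : ℝ}, 0 ≤ a → c ≤ T →
      (volume.restrict (Ioo a c) : Measure ℝ) ≤ volume.restrict (Icc 0 T) := fun ha hc =>
    Measure.restrict_mono ((Ioo_subset_Ioo ha hc).trans Ioo_subset_Icc_self) le_rfl
  have mt := hφt.1.aestronglyMeasurable
  have ms := hφs.1.aestronglyMeasurable
  have mb := hb.1.aestronglyMeasurable
  have hp1 : (1 : ENNReal) ≤ ENNReal.ofReal p := by
    rw [ENNReal.one_le_ofReal]; linarith
  have X : eLpNorm φt (ENNReal.ofReal p) (volume.restrict (Ioo 0 t)) ≤ (1 + Cp) * N := by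
    have e : φt = (fun x => φb x + (φt x - φb x)) := by ext x; ring
    calc _ = eLpNorm (φb + fun x => (φt x - φb x)) (ENNReal.ofReal p)
          (volume.restrict (Ioo 0 t)) := by
          congr 1
      _ ≤ eLpNorm φb (ENNReal.ofReal p) (volume.restrict (Ioo 0 t)) +
          eLpNorm (fun x => (φt x - φb x)) (ENNReal.ofReal p) (volume.restrict (Ioo 0 t)) :=
        eLpNorm_add_le (mb.mono_measure (hmono le_rfl htT))
          ((mt.sub mb).mono_measure (hmono le_rfl htT)) hp1
      _ ≤ N + Cp * N := by
        refine add_le_add (eLpNorm_mono_measure _ (hmono le_rfl htT))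
          ((Hp T t b φb φt hT ht htT hb hφt).trans ?_)
        gcongr
        exact eLpNorm_mono_measure _ (hmono ht le_rfl)
      _ = _ := by ring
  have Y : eLpNorm φt 2 (volume.restrict (Ioo s t)) ≤
      (1 + Cp) * N * ENNReal.ofReal ((t - s) ^ (1 / 2 - 1 / p)) := by
    have := eLpNorm_le_eLpNorm_mul_rpow_measure_univ (p := 2) (q := ENNReal.ofReal p)
      (by rw [← e2]; exact ENNReal.ofReal_le_ofReal hp2.le) (mt.mono_measure (hmono hs htT))
    refine this.trans ?_
    rw [ENNReal.toReal_ofReal hp0.le, Measure.restrict_apply_univ, Real.volume_Ioo,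
      ENNReal.toReal_ofNat, ENNReal.ofReal_rpow_of_nonneg (by linarith) (by linarith)]
    gcongr
    exact (eLpNorm_mono_measure _ (Measure.restrict_mono (Ioo_subset_Ioo_left hs) le_rfl)).trans X
  have Z : eLpNorm φt 2 (volume.restrict (Ioo s T)) ≤ eLpNorm φt 2 (volume.restrict (Ioo s t)) := by
    refine (rhb_split hst htT (by norm_num) (mt.mono_measure (hmono hs le_rfl))).trans ?_
    have : eLpNorm φt 2 (volume.restrict (Ioo t T)) = 0 := by
      rw [eLpNorm_congr_ae (g := 0) (rhb_rep hT hα ht htT hb hφt).1, eLpNorm_zero]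
    rw [this, add_zero]
  have hφs' : memLambda T α (Set.indicator (Set.Icc 0 s) (Set.indicator (Set.Icc 0 t) b)) φs := by
    rw [indicator_indicator, inter_eq_left.2 (Icc_subset_Icc_right hst)]
    exact hφs
  have A1 := H2 T s _ φt φs hT hs hsT hφt hφs'
  have A1' : eLpNorm (fun x => φt x - φs x) 2 (volume.restrict (Ioo 0 s)) ≤
      C2 * eLpNorm φt 2 (volume.restrict (Ioo s T)) := by
    refine le_trans (le_of_eq ?_) A1
    apply eLpNorm_congr_norm_ae
    filter_upwards with x
    exact norm_sub_rev _ _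
  have A2 : eLpNorm (fun x => φt x - φs x) 2 (volume.restrict (Ioo s T)) =
      eLpNorm φt 2 (volume.restrict (Ioo s T)) := by
    apply eLpNorm_congr_ae
    filter_upwards [(rhb_rep hT hα hs hsT hφt hφs').1] with x hx
    rw [hx, sub_zero]
  have B : eLpNorm (fun x => φt x - φs x) 2 (volume.restrict (Set.Icc 0 T)) ≤
      K * N * ENNReal.ofReal ((t - s) ^ (1 / 2 - 1 / p)) := by
    rw [← Measure.restrict_congr_set (Ioo_ae_eq_Icc (μ := volume) (a := (0:ℝ)) (b := T))]
    refine (rhb_split (f := fun x => φt x - φs x) hs hsT (by norm_num)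
      ((mt.sub ms).mono_measure (hmono le_rfl le_rfl))).trans ?_
    rw [A2]
    calc _ ≤ C2 * eLpNorm φt 2 (volume.restrict (Ioo s T)) +
          eLpNorm φt 2 (volume.restrict (Ioo s T)) := by gcongr
      _ = (C2 + 1) * eLpNorm φt 2 (volume.restrict (Ioo s T)) := by ring
      _ ≤ (C2 + 1) * ((1 + Cp) * N * ENNReal.ofReal ((t - s) ^ (1 / 2 - 1 / p))) := by
          gcongr
          exact Z.trans Y
      _ = _ := by rw [hK]; ring
  refine B.trans ?_
  rw [← ENNReal.ofReal_toReal hKt, ← ENNReal.ofReal_toReal hNt,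
    ← ENNReal.ofReal_mul ENNReal.toReal_nonneg, ← ENNReal.ofReal_mul (by positivity),
    ENNReal.toReal_ofReal ENNReal.toReal_nonneg, ENNReal.toReal_ofReal ENNReal.toReal_nonneg]
  apply ENNReal.ofReal_le_ofReal
  have hts : 0 ≤ t - s := by linarith
  have hle : (t - s) ^ (1 / 2 - 1 / p) ≤ T ^ (1 / 2 - 1 / p - δ) * (t - s) ^ δ := by
    calc (t - s) ^ (1 / 2 - 1 / p) = (t - s) ^ ((1 / 2 - 1 / p - δ) + δ) := by congr 1; ring
      _ = (t - s) ^ (1 / 2 - 1 / p - δ) * (t - s) ^ δ :=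
        rpow_add_of_nonneg hts (by linarith) hδ0.le
      _ ≤ _ := by
        gcongr
        linarith
  calc K.toReal * N.toReal * (t - s) ^ (1 / 2 - 1 / p) ≤
      K.toReal * N.toReal * (T ^ (1 / 2 - 1 / p - δ) * (t - s) ^ δ) := by gcongr
    _ = _ := by ring
end
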